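/- arXiv:1412.1499 — 4 statements merged into one kernel-verified Lean document; each statement's English description precedes it below -/
import Mathlib

section
/- For |x| < 1 let Φ(x) = Σ_{k,l≥0} (4k+1) x^{(4k+1)(4l+1)} + Σ_{k,l≥0} (4k+3) x^{(4k+3)(4l+3)} and Ψ(x) = Σ_{k,l≥0} (k+l+1) x^{(4k+1)(4l+3)}, and let F(x) = ∏_{n=1}^∞ (1 − xⁿ). Then for every complex x with |x| < 1, Φ(x) − 4 Ψ(x) = x · F(x²)⁴ F(x⁸)⁴ / F(x⁴)⁴. (Equivalently, this difference equals the eta quotient η(q_d⁸)⁴η(q_d²)⁴/η(q_d⁴)⁴ = η(q_d⁴)⁸/η(−q_d²)⁴.) -/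
open scoped BigOperators

/-- The Euler product `F(x) = ∏_{n=1}^∞ (1 − xⁿ)`. -/
noncomputable def eulerF (x : ℂ) : ℂ := ∏' n : ℕ, (1 - x ^ (n + 1))

/-- `Φ(x) = Σ_{k,l≥0} (4k+1) x^{(4k+1)(4l+1)} + Σ_{k,l≥0} (4k+3) x^{(4k+3)(4l+3)}`,
the coefficient of `(xy)²+(xw)²+(zy)²+(zw)²` in the open Gromov–Witten
potential of `ℙ¹_{2,2,2,2}`. -/
noncomputable def Phi2222 (x : ℂ) : ℂ :=
  (∑' p : ℕ × ℕ, (4 * (p.1 : ℂ) + 1) * x ^ ((4 * p.1 + 1) * (4 * p.2 + 1)))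
    + ∑' p : ℕ × ℕ, (4 * (p.1 : ℂ) + 3) * x ^ ((4 * p.1 + 3) * (4 * p.2 + 3))

/-- `Ψ(x) = Σ_{k,l≥0} (k+l+1) x^{(4k+1)(4l+3)}`, the coefficient of `xyzw` in
the open Gromov–Witten potential of `ℙ¹_{2,2,2,2}`. -/
noncomputable def Psi2222 (x : ℂ) : ℂ :=
  ∑' p : ℕ × ℕ, ((p.1 : ℂ) + (p.2 : ℂ) + 1) * x ^ ((4 * p.1 + 1) * (4 * p.2 + 3))


noncomputable def rr (y : ℂ) (k : ℕ) : ℂ :=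
  ∏ j ∈ Finset.range k, ((1 - y ^ (2 * j + 1)) / (1 - y ^ (2 * j + 2)))

noncomputable def ww (y : ℂ) (n : ℕ) : ℂ :=
  y ^ n * (1 + y ^ (2 * n + 1)) / (1 - y ^ (2 * n + 1)) ^ 2

noncomputable def CC (y : ℂ) (N : ℕ) : ℂ :=
  (rr y N)⁻¹ ^ 2 / (1 - y ^ (2 * N + 1)) ^ 2

lemma one_sub_pow_ne {y : ℂ} (hy : ‖y‖ < 1) (k : ℕ) : 1 - y ^ (k + 1) ≠ 0 := by
  intro h
  have h1 : y ^ (k + 1) = 1 := (sub_eq_zero.mp h).symm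
  have h2 : ‖y‖ ^ (k + 1) = 1 := by rw [← norm_pow, h1, norm_one]
  have h3 : ‖y‖ ^ (k + 1) < 1 := pow_lt_one₀ (norm_nonneg _) hy (by omega)
  linarith

lemma rr_succ (y : ℂ) (k : ℕ) :
    rr y (k + 1) = rr y k * ((1 - y ^ (2 * k + 1)) / (1 - y ^ (2 * k + 2))) := by
  unfold rr
  rw [Finset.prod_range_succ]

lemma rr_ne {y : ℂ} (hy : ‖y‖ < 1) (k : ℕ) : rr y k ≠ 0 := by
  unfold rr
  refine Finset.prod_ne_zero_iff.mpr fun j _ => div_ne_zero ?_ ?_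
  · exact one_sub_pow_ne hy _
  · exact one_sub_pow_ne hy (2 * j + 1)

lemma partial_sum {y : ℂ} (hy : ‖y‖ < 1) (hy0 : y ≠ 0) (N m : ℕ) (hm : m ≤ N + 1) :
    ∑ n ∈ Finset.range m,
      (ww y n * rr y (N + 2 + n) * rr y (N + 1 - n)
        - (1 - y ^ (2 * N + 2)) ^ 2 / (1 - y ^ (2 * N + 3)) ^ 2 *
          (ww y n * rr y (N + 1 + n) * rr y (N - n)))
    = y ^ (2 * N + 2) * (1 - y ^ (4 * N + 5))
        / ((1 - y ^ (2 * N + 2)) * (1 - y ^ (2 * N + 3)) ^ 3)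
        * (y ^ m - (y ^ m)⁻¹) * rr y (N + 1 + m) * rr y (N + 1 - m) := by
  induction m with
  | zero => simp
  | succ m ih =>
    rw [Finset.sum_range_succ, ih (by omega)]
    obtain ⟨d, rfl⟩ : ∃ d, N = m + d := ⟨N - m, by omega⟩
    have e1 : m + d + 1 - m = d + 1 := by omega
    have e2 : m + d - m = d := by omega
    have e3 : m + d + 1 - (m + 1) = d := by omega
    have e4 : m + d + 2 + m = (m + d + 1 + m) + 1 := by omega
    have e5 : m + d + 1 + (m + 1) = (m + d + 1 + m) + 1 := by omega
    rw [e1, e2, e3, e4, e5, rr_succ y d, rr_succ y (m + d + 1 + m)]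
    generalize rr y d = R1
    generalize rr y (m + d + 1 + m) = R2
    have h1 := one_sub_pow_ne hy (2 * (m + d) + 1)
    have h2 := one_sub_pow_ne hy (2 * (m + d) + 2)
    have h3 := one_sub_pow_ne hy (2 * d + 1)
    have h4 := one_sub_pow_ne hy (2 * (m + d + 1 + m) + 1)
    have h5 := one_sub_pow_ne hy (2 * m)
    have ha : y ^ m ≠ 0 := pow_ne_zero _ hy0
    unfold ww
    have p1 : y ^ (2 * (m + d) + 1 + 1) = (y ^ m) ^ 2 * (y ^ d) ^ 2 * y ^ 2 := by ring
    have p2 : y ^ (2 * (m + d) + 2 + 1) = (y ^ m) ^ 2 * (y ^ d) ^ 2 * y ^ 3 := by ring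
    have p3 : y ^ (2 * d + 1 + 1) = (y ^ d) ^ 2 * y ^ 2 := by ring
    have p4 : y ^ (2 * (m + d + 1 + m) + 1 + 1) = (y ^ m) ^ 4 * (y ^ d) ^ 2 * y ^ 4 := by ring
    have p5 : y ^ (2 * m + 1) = (y ^ m) ^ 2 * y := by ring
    have q1 : y ^ (2 * (m + d) + 2) = (y ^ m) ^ 2 * (y ^ d) ^ 2 * y ^ 2 := by ring
    have q2 : y ^ (2 * (m + d) + 3) = (y ^ m) ^ 2 * (y ^ d) ^ 2 * y ^ 3 := by ring
    have q3 : y ^ (2 * d + 2) = (y ^ d) ^ 2 * y ^ 2 := by ring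
    have q4 : y ^ (2 * (m + d + 1 + m) + 2) = (y ^ m) ^ 4 * (y ^ d) ^ 2 * y ^ 4 := by ring
    have q5 : y ^ (2 * d + 1) = (y ^ d) ^ 2 * y := by ring
    have q6 : y ^ (2 * (m + d + 1 + m) + 1) = (y ^ m) ^ 4 * (y ^ d) ^ 2 * y ^ 3 := by ring
    have q7 : y ^ (4 * (m + d) + 5) = (y ^ m) ^ 4 * (y ^ d) ^ 4 * y ^ 5 := by ring
    have q8 : y ^ (m + 1) = y ^ m * y := by ring
    rw [p1] at h1
    rw [p2] at h2
    rw [p3] at h3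
    rw [p4] at h4
    rw [p5] at h5
    rw [q1, q2, q3, q4, q5, q6, q7, q8, p5]
    generalize y ^ m = a at *
    generalize y ^ d = b at *
    field_simp
    ring

lemma finite_id {y : ℂ} (hy : ‖y‖ < 1) (hy0 : y ≠ 0) (N : ℕ) :
    ∑ n ∈ Finset.range (N + 1), ww y n * rr y (N + 1 + n) * rr y (N - n) = CC y N := by
  induction N with
  | zero =>
    have h1 := one_sub_pow_ne hy 0
    have h2 := one_sub_pow_ne hy 1
    simp [ww, rr, CC] at *
    field_simp
    ring
  | succ N ih =>
    have h := partial_sum hy hy0 N (N + 1) le_rfl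
    rw [Finset.sum_sub_distrib, ← Finset.mul_sum, ih, sub_eq_iff_eq_add] at h
    rw [Finset.sum_range_succ, show N + 1 + 1 = N + 2 by rfl, h]
    have e4 : N + 2 + (N + 1) = (2 * N + 2) + 1 := by omega
    have e5 : N + 1 + (N + 1) = 2 * N + 2 := by omega
    rw [e4, e5, rr_succ y (2 * N + 2), Nat.sub_self]
    unfold CC ww
    rw [rr_succ y N]
    have hr := rr_ne hy N
    have h0 : rr y 0 = 1 := by simp [rr]
    rw [h0]
    generalize rr y (2 * N + 2) = R2
    generalize rr y N = R1 at *
    have h1 := one_sub_pow_ne hy (2 * N + 1)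
    have h2 := one_sub_pow_ne hy (2 * N + 2)
    have h4 := one_sub_pow_ne hy (2 * (2 * N + 2) + 1)
    have h5 := one_sub_pow_ne hy (2 * N)
    have ha : y ^ N ≠ 0 := pow_ne_zero _ hy0
    have p1 : y ^ (2 * N + 1 + 1) = (y ^ N) ^ 2 * y ^ 2 := by ring
    have p2 : y ^ (2 * N + 2 + 1) = (y ^ N) ^ 2 * y ^ 3 := by ring
    have p4 : y ^ (2 * (2 * N + 2) + 1 + 1) = ((y ^ N) ^ 2 * y ^ 3) ^ 2 := by ring
    have p5 : y ^ (2 * N + 1) = (y ^ N) ^ 2 * y := by ring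
    have q1 : y ^ (2 * N + 2) = (y ^ N) ^ 2 * y ^ 2 := by ring
    have q2 : y ^ (2 * N + 3) = (y ^ N) ^ 2 * y ^ 3 := by ring
    have q4 : y ^ (2 * (2 * N + 2) + 2) = ((y ^ N) ^ 2 * y ^ 3) ^ 2 := by ring
    have q5 : y ^ (2 * (2 * N + 2) + 1) = (y ^ N) ^ 4 * y ^ 5 := by ring
    have q6 : y ^ (2 * (N + 1) + 1) = (y ^ N) ^ 2 * y ^ 3 := by ring
    have q7 : y ^ (4 * N + 5) = (y ^ N) ^ 4 * y ^ 5 := by ring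
    have q8 : y ^ (N + 1) = y ^ N * y := by ring
    rw [p1] at h1
    rw [p2] at h2
    rw [p4] at h4
    rw [p5] at h5
    rw [q1, q2, q4, q5, q6, q7, q8, p5]
    generalize y ^ N = a at *
    have h6 : 1 + a ^ 2 * y ^ 3 ≠ 0 := by
      intro h6
      apply h4
      linear_combination (1 - a ^ 2 * y ^ 3) * h6
    have h7 : 1 - (a ^ 2 * y ^ 3) ^ 2 = (1 - a ^ 2 * y ^ 3) * (1 + a ^ 2 * y ^ 3) := by ring
    rw [h7]
    field_simp
    ring

lemma summable_aux {y : ℂ} (hy : ‖y‖ < 1) (g : ℕ → ℕ) (hg : ∀ n, n ≤ g n) :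
    Summable fun n : ℕ => ‖-y ^ (g n)‖ := by
  refine Summable.of_nonneg_of_le (fun _ => norm_nonneg _) (fun n => ?_)
    (summable_geometric_of_lt_one (norm_nonneg y) hy)
  rw [norm_neg, norm_pow]
  exact pow_le_pow_of_le_one (norm_nonneg _) hy.le (hg n)

lemma mult_aux {y : ℂ} (hy : ‖y‖ < 1) (g : ℕ → ℕ) (hg : ∀ n, n ≤ g n) :
    Multipliable fun n : ℕ => 1 - y ^ (g n) := by
  simpa [sub_eq_add_neg] using multipliable_one_add_of_summable (summable_aux hy g hg)

lemma tprod_ne_aux {y : ℂ} (hy : ‖y‖ < 1) (g : ℕ → ℕ) (hg : ∀ n, n ≤ g n)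
    (hg1 : ∀ n, 1 ≤ g n) : ∏' n : ℕ, (1 - y ^ (g n)) ≠ 0 := by
  have := tprod_one_add_ne_zero_of_summable (f := fun n => -y ^ (g n)) (fun n => by
    obtain ⟨k, hk⟩ : ∃ k, g n = k + 1 := ⟨g n - 1, by have := hg1 n; omega⟩
    have := one_sub_pow_ne hy k
    simpa [hk, sub_eq_add_neg] using this) (summable_aux hy g hg)
  simpa [sub_eq_add_neg] using this

noncomputable def OO (y : ℂ) : ℂ := ∏' n : ℕ, (1 - y ^ (2 * n + 1))
noncomputable def EE (y : ℂ) : ℂ := ∏' n : ℕ, (1 - y ^ (2 * n + 2))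

lemma OO_ne {y : ℂ} (hy : ‖y‖ < 1) : OO y ≠ 0 :=
  tprod_ne_aux hy _ (fun n => by omega) (fun n => by omega)
lemma EE_ne {y : ℂ} (hy : ‖y‖ < 1) : EE y ≠ 0 :=
  tprod_ne_aux hy _ (fun n => by omega) (fun n => by omega)

open Filter Topology

lemma rr_tendsto {y : ℂ} (hy : ‖y‖ < 1) : Tendsto (rr y) atTop (𝓝 (OO y / EE y)) := by
  have h1 := (mult_aux hy (fun n => 2 * n + 1) (fun n => by omega)).hasProd.tendsto_prod_nat
  have h2 := (mult_aux hy (fun n => 2 * n + 2) (fun n => by omega)).hasProd.tendsto_prod_nat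
  refine (h1.div h2 (EE_ne hy)).congr fun n => ?_
  simp [rr, Finset.prod_div_distrib]

lemma pow_tendsto {y : ℂ} (hy : ‖y‖ < 1) (g : ℕ → ℕ) (hg : ∀ n, n ≤ g n) :
    Tendsto (fun n => y ^ (g n)) atTop (𝓝 0) :=
  (tendsto_pow_atTop_nhds_zero_of_norm_lt_one hy).comp
    (tendsto_atTop_mono hg tendsto_id)

lemma CC_tendsto {y : ℂ} (hy : ‖y‖ < 1) : Tendsto (CC y) atTop (𝓝 ((EE y / OO y) ^ 2)) := by
  have h1 := (rr_tendsto hy).inv₀ (div_ne_zero (OO_ne hy) (EE_ne hy))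
  have h2 := (pow_tendsto hy (fun n => 2 * n + 1) (fun n => by omega)).const_sub 1
  have h3 := (h1.pow 2).div (h2.pow 2) (by simp)
  have e : ((OO y / EE y)⁻¹ ^ 2 / (1 - 0) ^ 2 : ℂ) = (EE y / OO y) ^ 2 := by simp
  rw [← e]
  exact h3

lemma norm_one_sub_ge {y : ℂ} (hy : ‖y‖ < 1) (k : ℕ) : 1 - ‖y‖ ≤ ‖1 - y ^ (k + 1)‖ := by
  have h1 : ‖y ^ (k + 1)‖ ≤ ‖y‖ := by
    rw [norm_pow]
    exact pow_le_of_le_one (norm_nonneg _) hy.le (by omega)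
  have h2 := norm_sub_norm_le (1 : ℂ) (y ^ (k + 1))
  rw [norm_one] at h2
  linarith

lemma ww_bound {y : ℂ} (hy : ‖y‖ < 1) (n : ℕ) :
    ‖ww y n‖ ≤ 2 / (1 - ‖y‖) ^ 2 * ‖y‖ ^ n := by
  have h0 : 0 < 1 - ‖y‖ := by linarith
  have h1 := norm_one_sub_ge hy (2 * n)
  have h2 : ‖1 + y ^ (2 * n + 1)‖ ≤ 2 := by
    refine (norm_add_le _ _).trans ?_
    rw [norm_one, norm_pow]
    have := pow_le_one₀ (n := 2 * n + 1) (norm_nonneg y) hy.le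
    linarith
  unfold ww
  rw [norm_div, norm_mul, norm_pow, norm_pow]
  calc ‖y‖ ^ n * ‖1 + y ^ (2 * n + 1)‖ / ‖1 - y ^ (2 * n + 1)‖ ^ 2
      ≤ ‖y‖ ^ n * 2 / (1 - ‖y‖) ^ 2 := by gcongr
    _ = _ := by ring

lemma legendre {y : ℂ} (hy : ‖y‖ < 1) (hy0 : y ≠ 0) :
    ∑' n, ww y n = (EE y / OO y) ^ 4 := by
  obtain ⟨B, hB⟩ := (rr_tendsto hy).norm.bddAbove_range
  have hB' : ∀ n, ‖rr y n‖ ≤ B := fun n => hB ⟨n, rfl⟩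
  have hB0 : 0 ≤ B := (norm_nonneg _).trans (hB' 0)
  set L := OO y / EE y with hL
  let f : ℕ → ℕ → ℂ := fun N n =>
    if n ∈ Finset.range (N + 1) then ww y n * rr y (N + 1 + n) * rr y (N - n) else 0
  have hf : ∀ N, ∑' n, f N n = CC y N := by
    intro N
    rw [← finite_id hy hy0 N, tsum_eq_sum (s := Finset.range (N + 1))]
    · refine Finset.sum_congr rfl fun n hn => ?_
      simp only [f, if_pos hn]
    · intro n hn
      simp only [f, if_neg hn]
  have key : Tendsto (fun N => ∑' n, f N n) atTop (𝓝 (∑' n, ww y n * L * L)) := by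
    refine tendsto_tsum_of_dominated_convergence
      (bound := fun n => 2 / (1 - ‖y‖) ^ 2 * ‖y‖ ^ n * B * B) ?_ ?_ ?_
    · exact (((summable_geometric_of_lt_one (norm_nonneg y) hy).mul_left _).mul_right _).mul_right _
    · intro n
      have h1 : Tendsto (fun N => rr y (N + 1 + n)) atTop (𝓝 L) :=
        (rr_tendsto hy).comp (tendsto_atTop_mono (fun N => by show N ≤ N + 1 + n; omega) tendsto_id)
      have h2 : Tendsto (fun N => rr y (N - n)) atTop (𝓝 L) :=
        (rr_tendsto hy).comp (tendsto_sub_atTop_nat n)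
      refine ((h1.const_mul (ww y n)).mul h2).congr' ?_
      filter_upwards [eventually_ge_atTop n] with N hN
      have : n ∈ Finset.range (N + 1) := Finset.mem_range.mpr (by omega)
      simp only [f, if_pos this]
    · refine Eventually.of_forall fun N n => ?_
      have h0 : 0 < 1 - ‖y‖ := by linarith
      by_cases hn : n ∈ Finset.range (N + 1)
      · simp only [f, if_pos hn]
        rw [norm_mul, norm_mul]
        have := ww_bound hy n
        gcongr
        · exact hB' _
        · exact hB' _
      · simp only [f, if_neg hn, norm_zero]
        positivity
  simp only [hf] at key
  have h := tendsto_nhds_unique key (CC_tendsto hy)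
  rw [tsum_mul_right, tsum_mul_right] at h
  have hO := OO_ne hy
  have hE := EE_ne hy
  rw [hL] at h
  field_simp at h ⊢
  linear_combination h

lemma eulerF_split {z : ℂ} (hz : ‖z‖ < 1) : eulerF z = OO z * eulerF (z ^ 2) := by
  have h1 := mult_aux hz (fun n => 2 * n + 1) (fun n => by omega)
  have h2 := mult_aux hz (fun n => 2 * n + 1 + 1) (fun n => by omega)
  have := tprod_even_mul_odd (f := fun n => 1 - z ^ (n + 1)) h1 h2
  unfold eulerF OO
  rw [← this]
  congr 1
  refine tprod_congr fun n => ?_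
  ring

lemma eulerF_ne {z : ℂ} (hz : ‖z‖ < 1) : eulerF z ≠ 0 :=
  tprod_ne_aux hz (fun n => n + 1) (fun n => by omega) (fun n => by omega)

lemma OO_neg {z : ℂ} (hz : ‖z‖ < 1) : OO z * OO (-z) = OO (z ^ 2) := by
  have h1 := mult_aux hz (fun n => 2 * n + 1) (fun n => by omega)
  have h2 := mult_aux (y := -z) (by simpa using hz) (fun n => 2 * n + 1) (fun n => by omega)
  unfold OO
  rw [← h1.tprod_mul h2]
  refine tprod_congr fun n => ?_
  rw [Odd.neg_pow (by simp)]
  ring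

lemma EE_eq (z : ℂ) : EE z = eulerF (z ^ 2) := by
  unfold EE eulerF
  refine tprod_congr fun n => ?_
  ring

lemma prod_side {x : ℂ} (hx : ‖x‖ < 1) :
    EE (-x ^ 2) / OO (-x ^ 2) = eulerF (x ^ 2) * eulerF (x ^ 8) / eulerF (x ^ 4) := by
  have hp : ∀ k : ℕ, ‖x ^ (k + 1)‖ < 1 := fun k => by
    rw [norm_pow]
    exact pow_lt_one₀ (norm_nonneg _) hx (by omega)
  have a1 := eulerF_split (hp 1)
  have a2 := eulerF_split (hp 3)
  have a3 := OO_neg (hp 1)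
  have a4 := EE_eq (-x ^ 2)
  have n1 := eulerF_ne (hp 3)
  have n2 := OO_ne (y := -x ^ 2) (by simpa using hp 1)
  have b1 : (x ^ (1 + 1)) ^ 2 = x ^ 4 := by ring
  have b2 : (x ^ (3 + 1)) ^ 2 = x ^ 8 := by ring
  have b3 : (-x ^ 2) ^ 2 = x ^ 4 := by ring
  rw [b1] at a1 a3
  rw [b2] at a2
  rw [b3] at a4
  norm_num at a1 a2 a3 n1
  rw [a4, a1]
  field_simp
  linear_combination a2 - eulerF (x ^ 8) * a3

lemma ww_expand {y : ℂ} (hy : ‖y‖ < 1) (n : ℕ) :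
    HasSum (fun k : ℕ => (2 * (k : ℂ) + 1) * y ^ (n + k + 2 * n * k)) (ww y n) := by
  have hz : ‖y ^ (2 * n + 1)‖ < 1 := by
    rw [norm_pow]; exact pow_lt_one₀ (norm_nonneg _) hy (by omega)
  have h1 := (hasSum_coe_mul_geometric_of_norm_lt_one hz).mul_left (2 * y ^ n)
  have h2 := (hasSum_geometric_of_norm_lt_one hz).mul_left (y ^ n)
  have h3 := h1.add h2
  have e1 : (2 * y ^ n * (y ^ (2 * n + 1) / (1 - y ^ (2 * n + 1)) ^ 2)
      + y ^ n * (1 - y ^ (2 * n + 1))⁻¹) = ww y n := by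
    have := one_sub_pow_ne hy (2 * n)
    unfold ww
    field_simp
    ring
  rw [← e1]
  have e2 : (fun k : ℕ => (2 * (k : ℂ) + 1) * y ^ (n + k + 2 * n * k)) = fun k : ℕ =>
      2 * y ^ n * ((k : ℂ) * (y ^ (2 * n + 1)) ^ k) + y ^ n * (y ^ (2 * n + 1)) ^ k := by
    funext k
    ring
  rw [e2]
  exact h3

noncomputable def ff (x : ℂ) (p : ℕ × ℕ) : ℂ :=
  (2 * (p.1 : ℂ) + 1) * (-1) ^ (p.1 + p.2) * x ^ ((2 * p.1 + 1) * (2 * p.2 + 1))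

lemma ff_summable {x : ℂ} (hx : ‖x‖ < 1) : Summable (ff x) := by
  have hn : ‖(‖x‖ : ℝ)‖ < 1 := by simpa using hx
  have h1 : Summable fun k : ℕ => (2 * (k : ℝ) + 1) * ‖x‖ ^ k := by
    have a := (hasSum_coe_mul_geometric_of_norm_lt_one hn).summable.mul_left 2
    have b := summable_geometric_of_norm_lt_one hn
    refine (a.add b).congr fun k => ?_
    ring
  have h2 := summable_geometric_of_norm_lt_one hn
  have h3 := h1.mul_of_nonneg h2 (fun k => by positivity) (fun k => by positivity)
  refine Summable.of_norm_bounded h3 fun p => ?_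
  unfold ff
  have e : ‖(2 * (p.1 : ℂ) + 1)‖ = 2 * (p.1 : ℝ) + 1 := by
    have : (2 * (p.1 : ℂ) + 1) = ((2 * p.1 + 1 : ℕ) : ℂ) := by push_cast; ring
    rw [this, Complex.norm_natCast]
    push_cast; ring
  rw [norm_mul, norm_mul, e, norm_pow, norm_neg, norm_one, one_pow, mul_one, norm_pow, mul_assoc,
    ← pow_add]
  refine mul_le_mul_of_nonneg_left ?_ (by positivity)
  exact pow_le_pow_of_le_one (norm_nonneg _) hx.le (by nlinarith)

lemma ff_tsum {x : ℂ} (hx : ‖x‖ < 1) : ∑' p, ff x p = x * ∑' n, ww (-x ^ 2) n := by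
  have hs := ff_summable hx
  have hy : ‖-x ^ 2‖ < 1 := by
    rw [norm_neg, norm_pow]; exact pow_lt_one₀ (norm_nonneg _) hx (by omega)
  rw [← (Equiv.prodComm ℕ ℕ).tsum_eq (ff x)]
  have hs' : Summable (fun p : ℕ × ℕ => ff x (Equiv.prodComm ℕ ℕ p)) :=
    (Equiv.prodComm ℕ ℕ).summable_iff.mpr hs
  rw [hs'.tsum_prod, ← tsum_mul_left]
  refine tsum_congr fun n => ?_
  rw [← (ww_expand hy n).tsum_eq, ← tsum_mul_left]
  refine tsum_congr fun k => ?_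
  simp only [ff, Equiv.prodComm_apply, Prod.swap_prod_mk]
  have e1 : (2 * k + 1) * (2 * n + 1) = 2 * (n + k + 2 * n * k) + 1 := by ring
  have e2 : (-1 : ℂ) ^ (n + k + 2 * n * k) = (-1) ^ (k + n) := by
    rw [pow_add, mul_assoc, pow_mul]; simp [add_comm]
  rw [neg_pow (x ^ 2), e2, e1, pow_succ x, pow_mul]
  ring

lemma tsum_split {f : ℕ × ℕ → ℂ} (hf : Summable f) :
    ∑' p, f p = ((∑' p : ℕ × ℕ, f (2 * p.1, 2 * p.2)) + ∑' p : ℕ × ℕ, f (2 * p.1, 2 * p.2 + 1))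
      + ((∑' p : ℕ × ℕ, f (2 * p.1 + 1, 2 * p.2))
        + ∑' p : ℕ × ℕ, f (2 * p.1 + 1, 2 * p.2 + 1)) := by
  have i0 : Function.Injective (fun n : ℕ => 2 * n) := fun a b h => by simpa using h
  have i1 : Function.Injective (fun n : ℕ => 2 * n + 1) := fun a b h => by simpa using h
  have s00 : Summable fun p : ℕ × ℕ => f (2 * p.1, 2 * p.2) := hf.comp_injective (i0.prodMap i0)
  have s01 : Summable fun p : ℕ × ℕ => f (2 * p.1, 2 * p.2 + 1) :=
    hf.comp_injective (i0.prodMap i1)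
  have s10 : Summable fun p : ℕ × ℕ => f (2 * p.1 + 1, 2 * p.2) :=
    hf.comp_injective (i1.prodMap i0)
  have s11 : Summable fun p : ℕ × ℕ => f (2 * p.1 + 1, 2 * p.2 + 1) :=
    hf.comp_injective (i1.prodMap i1)
  have hin : ∀ k, ∑' n, f (k, n) = (∑' n, f (k, 2 * n)) + ∑' n, f (k, 2 * n + 1) := fun k =>
    (tsum_even_add_odd (f := fun n => f (k, n)) ((hf.prod_factor k).comp_injective i0)
      ((hf.prod_factor k).comp_injective i1)).symm
  rw [hf.tsum_prod, s00.tsum_prod, s01.tsum_prod, s10.tsum_prod, s11.tsum_prod,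
    ← tsum_even_add_odd (f := fun k => ∑' n, f (k, n))
      (hf.prod.comp_injective i0) (hf.prod.comp_injective i1)]
  have r0 := s00.prod.tsum_add s01.prod
  have r1 := s10.prod.tsum_add s11.prod
  rw [← r0, ← r1]
  simp only [hin]

lemma lhs_eq {x : ℂ} (hx : ‖x‖ < 1) : Phi2222 x - 4 * Psi2222 x = ∑' p, ff x p := by
  have hs := ff_summable hx
  have i0 : Function.Injective (fun n : ℕ => 2 * n) := fun a b h => by simpa using h
  have i1 : Function.Injective (fun n : ℕ => 2 * n + 1) := fun a b h => by simpa using h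
  have s01 : Summable fun p : ℕ × ℕ => ff x (2 * p.1, 2 * p.2 + 1) :=
    hs.comp_injective (i0.prodMap i1)
  have s10 : Summable fun p : ℕ × ℕ => ff x (2 * p.1 + 1, 2 * p.2) :=
    hs.comp_injective (i1.prodMap i0)
  have s10' : Summable (fun p : ℕ × ℕ => ff x (2 * p.2 + 1, 2 * p.1)) :=
    (Equiv.prodComm ℕ ℕ).summable_iff.mpr s10
  have e10 : ∑' p : ℕ × ℕ, ff x (2 * p.1 + 1, 2 * p.2)
      = ∑' p : ℕ × ℕ, ff x (2 * p.2 + 1, 2 * p.1) :=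
    ((Equiv.prodComm ℕ ℕ).tsum_eq (fun p : ℕ × ℕ => ff x (2 * p.1 + 1, 2 * p.2))).symm
  have ePsi : 4 * Psi2222 x = -((∑' p : ℕ × ℕ, ff x (2 * p.1, 2 * p.2 + 1))
      + ∑' p : ℕ × ℕ, ff x (2 * p.1 + 1, 2 * p.2)) := by
    rw [e10, ← s01.tsum_add s10', ← tsum_neg]
    unfold Psi2222
    rw [← tsum_mul_left]
    refine tsum_congr fun p => ?_
    simp only [ff]
    have o1 : (-1 : ℂ) ^ (2 * p.1 + (2 * p.2 + 1)) = -1 := Odd.neg_one_pow ⟨p.1 + p.2, by ring⟩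
    have o2 : (-1 : ℂ) ^ (2 * p.2 + 1 + 2 * p.1) = -1 := Odd.neg_one_pow ⟨p.1 + p.2, by ring⟩
    have x1 : (2 * (2 * p.1) + 1) * (2 * (2 * p.2 + 1) + 1) = (4 * p.1 + 1) * (4 * p.2 + 3) := by
      ring
    have x2 : (2 * (2 * p.2 + 1) + 1) * (2 * (2 * p.1) + 1) = (4 * p.1 + 1) * (4 * p.2 + 3) := by
      ring
    rw [o1, o2, x1, x2]
    push_cast
    ring
  have ePhi : Phi2222 x = (∑' p : ℕ × ℕ, ff x (2 * p.1, 2 * p.2))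
      + ∑' p : ℕ × ℕ, ff x (2 * p.1 + 1, 2 * p.2 + 1) := by
    unfold Phi2222
    congr 1
    · refine tsum_congr fun p => ?_
      simp only [ff]
      have o1 : (-1 : ℂ) ^ (2 * p.1 + 2 * p.2) = 1 := Even.neg_one_pow ⟨p.1 + p.2, by ring⟩
      have x1 : (2 * (2 * p.1) + 1) * (2 * (2 * p.2) + 1) = (4 * p.1 + 1) * (4 * p.2 + 1) := by
        ring
      rw [o1, x1]
      push_cast
      ring
    · refine tsum_congr fun p => ?_
      simp only [ff]
      have o1 : (-1 : ℂ) ^ (2 * p.1 + 1 + (2 * p.2 + 1)) = 1 :=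
        Even.neg_one_pow ⟨p.1 + p.2 + 1, by ring⟩
      have x1 : (2 * (2 * p.1 + 1) + 1) * (2 * (2 * p.2 + 1) + 1)
          = (4 * p.1 + 3) * (4 * p.2 + 3) := by ring
      rw [o1, x1]
      push_cast
      ring
  rw [ePsi, ePhi, tsum_split hs]
  ring

/-- `Φ(x) − 4Ψ(x) = x F(x²)⁴F(x⁸)⁴/F(x⁴)⁴`, i.e.
`ψ − 4φ = η(q_d⁸)⁴η(q_d²)⁴/η(q_d⁴)⁴`. -/
theorem phi_sub_four_psi (x : ℂ) (hx : ‖x‖ < 1) :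
    Phi2222 x - 4 * Psi2222 x
      = x * eulerF (x ^ 2) ^ 4 * eulerF (x ^ 8) ^ 4 / eulerF (x ^ 4) ^ 4 := by
  rw [lhs_eq hx, ff_tsum hx]
  rcases eq_or_ne x 0 with rfl | h0
  · simp
  have hy : ‖-x ^ 2‖ < 1 := by
    rw [norm_neg, norm_pow]; exact pow_lt_one₀ (norm_nonneg _) hx (by omega)
  rw [legendre hy (neg_ne_zero.mpr (pow_ne_zero _ h0)), prod_side hx]
  ring
end

section
/- For |x| < 1 let Ψ(x) = Σ_{k,l≥0} (k+l+1) x^{(4k+1)(4l+3)} and F(x) = ∏_{n=1}^∞ (1 − xⁿ). Then for every complex x with |x| < 1, Ψ(x) = x³ · F(x⁸)² F(x^{16})⁴ / F(x⁴)². (This expresses the coefficient of xyzw in the open Gromov–Witten potential of ℙ¹_{2,2,2,2} as the eta quotient η(q_d⁸)²η(q_d^{16})⁴/η(q_d⁴)², hence as a modular form for Γ(2) in the Kähler parameter q = q_d⁸.) -/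
open scoped BigOperators

/-- Finite `q`-Pochhammer product. -/
noncomputable def pochF (c Q : ℂ) (m : ℕ) : ℂ := ∏ k ∈ Finset.range m, (1 - c * Q ^ k)

/-- Auxiliary sign and power factor. -/
noncomputable def signT (Q : ℂ) (i : ℕ) : ℂ := ∏ k ∈ Finset.range i, (-(Q ^ k))

lemma prod_low (Q c d : ℂ) (h : c * d = Q) (i : ℕ) :
    ∏ k ∈ Finset.range i, (Q ^ i - c * Q ^ k) = c ^ i * signT Q i * pochF d Q i := by
  unfold signT pochF
  rw [← Finset.prod_range_reflect (fun k => 1 - d * Q ^ k) i]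
  have hc : c ^ i = ∏ k ∈ Finset.range i, c := by simp
  rw [hc, ← Finset.prod_mul_distrib, ← Finset.prod_mul_distrib]
  refine Finset.prod_congr rfl fun k hk => ?_
  rw [Finset.mem_range] at hk
  obtain ⟨m, rfl⟩ : ∃ m, i = k + 1 + m := ⟨i - (k + 1), by omega⟩
  have : k + 1 + m - 1 - k = m := by omega
  rw [this, pow_add, pow_succ]
  nth_rewrite 2 [← h]
  ring

lemma prod_low' (Q c : ℂ) (L : ℕ) :
    ∏ k ∈ Finset.range (L + 1), (c * Q ^ L - Q ^ k) = signT Q (L + 1) * pochF c Q (L + 1) := by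
  unfold signT pochF
  rw [← Finset.prod_range_reflect (fun k => 1 - c * Q ^ k) (L + 1), ← Finset.prod_mul_distrib]
  refine Finset.prod_congr rfl fun k hk => ?_
  rw [Finset.mem_range] at hk
  obtain ⟨m, rfl⟩ : ∃ m, L = k + m := ⟨L - k, by omega⟩
  have : k + m + 1 - 1 - k = m := by omega
  rw [this, pow_add]
  ring

lemma prod_high (A c Q : ℂ) (r : ℕ) :
    ∏ k ∈ Finset.range r, (A - A * (c * Q ^ k)) = A ^ r * pochF c Q r := by
  unfold pochF
  have hc : A ^ r = ∏ k ∈ Finset.range r, A := by simp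
  rw [hc, ← Finset.prod_mul_distrib]
  refine Finset.prod_congr rfl fun k _ => ?_
  ring

lemma prod_erase_split (f : ℕ → ℂ) (i r : ℕ) :
    ∏ k ∈ (Finset.range (i + 1 + r)).erase i, f k =
      (∏ k ∈ Finset.range i, f k) * ∏ k ∈ Finset.range r, f (i + 1 + k) := by
  have h1 : ∏ k ∈ (Finset.range (i + 1 + r)).erase i, f k =
      ∏ k ∈ (Finset.range (i + 1 + r)).erase i, (if k = i then 1 else f k) := by
    refine Finset.prod_congr rfl fun k hk => ?_
    rw [if_neg (Finset.ne_of_mem_erase hk)]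
  rw [h1, Finset.prod_erase _ (by simp), Finset.prod_range_add, Finset.prod_range_succ]
  simp only [if_true, mul_one]
  congr 1
  · refine Finset.prod_congr rfl fun k hk => ?_
    rw [if_neg (Finset.mem_range.1 hk).ne]
  · refine Finset.prod_congr rfl fun k _ => ?_
    rw [if_neg (by omega)]

lemma prod_erase_nodes (Q c : ℂ) (i r : ℕ) :
    ∏ k ∈ (Finset.range (i + 1 + r)).erase i, (c * Q ^ i - c * Q ^ k) =
      c ^ (i + r) * (signT Q i * pochF Q Q i * ((Q ^ i) ^ r * pochF Q Q r)) := by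
  rw [prod_erase_split]
  have h1 : ∏ k ∈ Finset.range i, (c * Q ^ i - c * Q ^ k) =
      c ^ i * ∏ k ∈ Finset.range i, (Q ^ i - 1 * Q ^ k) := by
    have hc : c ^ i = ∏ k ∈ Finset.range i, c := by simp
    rw [hc, ← Finset.prod_mul_distrib]
    refine Finset.prod_congr rfl fun k _ => ?_
    ring
  have h2 : ∏ k ∈ Finset.range r, (c * Q ^ i - c * Q ^ (i + 1 + k)) =
      ∏ k ∈ Finset.range r, (c * Q ^ i - (c * Q ^ i) * (Q * Q ^ k)) := by
    refine Finset.prod_congr rfl fun k _ => ?_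
    ring
  rw [h1, h2, prod_high, prod_low Q 1 Q (one_mul Q)]
  ring

lemma one_sub_pow_ne_s17 (q : ℂ) (hq : ‖q‖ < 1) (n : ℕ) (hn : n ≠ 0) : 1 - q ^ n ≠ 0 := by
  intro h
  have h1 : q ^ n = 1 := (sub_eq_zero.1 h).symm
  have h2 : ‖q‖ ^ n = 1 := by rw [← norm_pow, h1, norm_one]
  exact (pow_lt_one₀ (norm_nonneg q) hq hn).ne h2

lemma pochF_ne (q : ℂ) (hq : ‖q‖ < 1) (a : ℕ) (ha : a ≠ 0) (m : ℕ) :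
    pochF (q ^ a) (q ^ 4) m ≠ 0 := by
  unfold pochF
  refine Finset.prod_ne_zero_iff.2 fun k _ => ?_
  rw [← pow_mul, ← pow_add]
  exact one_sub_pow_ne_s17 q hq _ (by omega)

lemma pow_inj_of (q : ℂ) (hq0 : q ≠ 0) (hq : ‖q‖ < 1) {a b : ℕ} (h : q ^ a = q ^ b) : a = b := by
  have h2 : ‖q‖ ^ a = ‖q‖ ^ b := by rw [← norm_pow, h, norm_pow]
  exact (pow_right_strictAnti₀ (norm_pos_iff.2 hq0) hq).injective h2

lemma signT_ne (Q : ℂ) (hQ : Q ≠ 0) (i : ℕ) : signT Q i ≠ 0 := by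
  unfold signT
  exact Finset.prod_ne_zero_iff.2 fun k _ => neg_ne_zero.2 (pow_ne_zero _ hQ)

/-- ratio `(c;q⁴)_m / (q⁴;q⁴)_m`. -/
noncomputable def ratU (q : ℂ) (a m : ℕ) : ℂ := pochF (q ^ a) (q ^ 4) m / pochF (q ^ 4) (q ^ 4) m

lemma lagrange_raw (q : ℂ) (hq0 : q ≠ 0) (hq : ‖q‖ < 1) (L : ℕ) :
    ∑ i ∈ Finset.range (2 * L + 2), q ^ i * ratU q 3 i * ratU q 1 (2 * L + 1 - i) /
        ((q ^ 4) ^ i - q * (q ^ 4) ^ L) ^ 2 * (q * ((q ^ 4) ^ L) ^ 2) =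
      q ^ L * (pochF (q ^ 4) (q ^ 4) L ^ 2 /
        (pochF (q ^ 1) (q ^ 4) (L + 1) * pochF (q ^ 3) (q ^ 4) (L + 1))) := by
  set Q : ℂ := q ^ 4 with hQ
  have hQ0 : Q ≠ 0 := pow_ne_zero _ hq0
  set y : ℂ := q * Q ^ L with hy
  set S : Polynomial ℂ := ∏ k ∈ (Finset.range (L + 1 + L)).erase L,
    (Polynomial.X - Polynomial.C (q * Q ^ k)) with hS
  have hevS : ∀ z, S.eval z = ∏ k ∈ (Finset.range (L + 1 + L)).erase L, (z - q * Q ^ k) := by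
    intro z
    rw [hS, Polynomial.eval_prod]
    simp
  have hdeg : S.degree < ((Finset.range (2 * L + 2)).card : WithBot ℕ) := by
    refine lt_of_le_of_lt Polynomial.degree_le_natDegree ?_
    rw [hS, Polynomial.natDegree_finsetProd_X_sub_C_eq_card]
    have : L ∈ Finset.range (L + 1 + L) := Finset.mem_range.2 (by omega)
    rw [Finset.card_erase_of_mem this, Finset.card_range, Finset.card_range]
    exact_mod_cast (by omega)
  have hinj : Set.InjOn (fun i : ℕ => Q ^ i) (Finset.range (2 * L + 2) : Set ℕ) := by
    intro a _ b _ h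
    simp only [hQ, ← pow_mul] at h
    have := pow_inj_of q hq0 hq h
    omega
  have hnode : ∀ i : ℕ, y ≠ Q ^ i := by
    intro i h
    have h' : q ^ (1 + 4 * L) = q ^ (4 * i) := by
      rw [pow_add, pow_mul, pow_mul, pow_one]; exact h
    have := pow_inj_of q hq0 hq h'
    omega
  have key := Lagrange.eval_interpolate_not_at_node (s := Finset.range (2 * L + 2))
    (v := fun i : ℕ => Q ^ i) (fun i => S.eval (Q ^ i)) (x := y) (fun i _ => hnode i)
  rw [← Lagrange.eq_interpolate hinj hdeg, Lagrange.eval_nodal] at key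
  have hSy : S.eval y = q ^ (L + L) * (signT Q L * pochF Q Q L * ((Q ^ L) ^ L * pochF Q Q L)) := by
    rw [hevS, hy, prod_erase_nodes]
  have hD : ∏ i ∈ Finset.range (2 * L + 2), (y - Q ^ i) =
      signT Q (L + 1) * pochF (q ^ 1) Q (L + 1) * (y ^ (L + 1) * pochF (q ^ 3) Q (L + 1)) := by
    rw [show 2 * L + 2 = (L + 1) + (L + 1) by omega, Finset.prod_range_add, pow_one, hy,
      prod_low', ← prod_high]
    congr 1
    refine Finset.prod_congr rfl fun k _ => ?_
    rw [hQ]; ring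
  have hterm : ∀ i ∈ Finset.range (2 * L + 2),
      Lagrange.nodalWeight (Finset.range (2 * L + 2)) (fun i : ℕ => Q ^ i) i * (y - Q ^ i)⁻¹ *
        S.eval (Q ^ i) =
      -(q ^ i * ratU q 3 i * ratU q 1 (2 * L + 1 - i) / (Q ^ i - y) ^ 2) := by
    intro i hi
    rw [Finset.mem_range] at hi
    obtain ⟨r, hr⟩ : ∃ r, 2 * L + 1 = i + r := ⟨2 * L + 1 - i, by omega⟩
    have hr2 : 2 * L + 1 - i = r := by omega
    have hyi : Q ^ i - y ≠ 0 := sub_ne_zero.2 (hnode i).symm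
    have hyi' : y - Q ^ i ≠ 0 := sub_ne_zero.2 (hnode i)
    have hSi : S.eval (Q ^ i) * (Q ^ i - y) =
        q ^ i * signT Q i * pochF (q ^ 3) Q i * ((Q ^ i) ^ r * pochF (q ^ 1) Q r) := by
      rw [hevS, hy, Finset.prod_erase_mul _ (fun k => Q ^ i - q * Q ^ k)
        (Finset.mem_range.2 (by omega)), show L + 1 + L = i + r by omega, Finset.prod_range_add,
        prod_low Q q (q ^ 3) (by rw [hQ]; ring), ← prod_high]
      congr 1
      refine Finset.prod_congr rfl fun k _ => ?_
      ring
    have hW : Lagrange.nodalWeight (Finset.range (2 * L + 2)) (fun i : ℕ => Q ^ i) i =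
        (signT Q i * pochF Q Q i * ((Q ^ i) ^ r * pochF Q Q r))⁻¹ := by
      unfold Lagrange.nodalWeight
      have := prod_erase_nodes Q 1 i r
      simp only [one_mul, one_pow] at this
      rw [Finset.prod_inv_distrib, ← this, show 2 * L + 2 = i + 1 + r by omega]
    rw [hr2, hW, eq_div_of_mul_eq hyi hSi]
    unfold ratU
    rw [← hQ]
    have e1 := pochF_ne q hq 4 (by norm_num) i
    have e2 := pochF_ne q hq 4 (by norm_num) r
    rw [← hQ] at e1 e2
    have e3 := signT_ne Q hQ0 i
    have e4 : (Q ^ i) ^ r ≠ 0 := pow_ne_zero _ (pow_ne_zero _ hQ0)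
    have e5 : y - Q ^ i = -(Q ^ i - y) := by ring
    rw [e5]
    generalize Q ^ i - y = w at *
    generalize (Q ^ i) ^ r = w2 at *
    field_simp
  rw [Finset.sum_congr rfl hterm, Finset.sum_neg_distrib, hSy, hD] at key
  rw [← Finset.sum_mul]
  set sm := ∑ i ∈ Finset.range (2 * L + 2),
    q ^ i * ratU q 3 i * ratU q 1 (2 * L + 1 - i) / (Q ^ i - y) ^ 2
  have e1 := pochF_ne q hq 1 (by norm_num) (L + 1)
  have e2 := pochF_ne q hq 3 (by norm_num) (L + 1)
  rw [← hQ] at e1 e2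
  have e3 := signT_ne Q hQ0 L
  have e4 : Q ^ L ≠ 0 := pow_ne_zero _ hQ0
  have hT : signT Q (L + 1) = signT Q L * (-(Q ^ L)) := by
    unfold signT; rw [Finset.prod_range_succ]
  rw [hT, hy, mul_pow, pow_succ q L, pow_succ (Q ^ L) L, pow_add q L L] at key
  have e5 : (Q ^ L) ^ L ≠ 0 := pow_ne_zero _ e4
  have e6 : q ^ L ≠ 0 := pow_ne_zero _ hq0
  generalize (Q ^ L) ^ L = w2 at *
  generalize Q ^ L = w3 at *
  generalize q ^ L = w4 at *
  rw [mul_div_assoc', eq_div_iff (mul_ne_zero e1 e2)]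
  have e7 : signT Q L * w2 * w4 ≠ 0 := mul_ne_zero (mul_ne_zero e3 e5) e6
  apply mul_left_cancel₀ e7
  linear_combination -key

lemma finite_id_s17 (q : ℂ) (hq0 : q ≠ 0) (hq : ‖q‖ < 1) (L : ℕ) :
    ∑ n ∈ Finset.range (L + 1), ratU q 3 (L - n) * ratU q 1 (L + 1 + n) *
        (q ^ (7 * n + 1) / (1 - q ^ (4 * n + 1)) ^ 2) +
    ∑ n ∈ Finset.range (L + 1), ratU q 3 (L + 1 + n) * ratU q 1 (L - n) *
        (q ^ n / (1 - q ^ (4 * n + 3)) ^ 2) =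
      pochF (q ^ 4) (q ^ 4) L ^ 2 /
        (pochF (q ^ 1) (q ^ 4) (L + 1) * pochF (q ^ 3) (q ^ 4) (L + 1)) := by
  have h := lagrange_raw q hq0 hq L
  have e6 : q ^ L ≠ 0 := pow_ne_zero _ hq0
  apply mul_left_cancel₀ e6
  set f : ℕ → ℂ := fun i => q ^ i * ratU q 3 i * ratU q 1 (2 * L + 1 - i) /
        ((q ^ 4) ^ i - q * (q ^ 4) ^ L) ^ 2 * (q * ((q ^ 4) ^ L) ^ 2) with hf
  have hs := Finset.sum_range_add f (L + 1) (L + 1)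
  rw [← Finset.sum_range_reflect f (L + 1), show (L + 1) + (L + 1) = 2 * L + 2 by omega] at hs
  rw [← h, hs, mul_add, Finset.mul_sum, Finset.mul_sum]
  clear h hs
  simp only [hf]
  clear hf f
  congr 1
  · refine Finset.sum_congr rfl fun n hn => ?_
    rw [Finset.mem_range] at hn
    obtain ⟨m, rfl⟩ : ∃ m, L = n + m := ⟨L - n, by omega⟩
    have a1 : n + m + 1 - 1 - n = m := by omega
    have a2 : 2 * (n + m) + 1 - m = n + m + 1 + n := by omega
    have a3 : n + m - n = m := by omega
    rw [a1, a2, a3]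
    have a4 : (q ^ 4) ^ m - q * (q ^ 4) ^ (n + m) = (q ^ 4) ^ m * (1 - q ^ (4 * n + 1)) := by ring
    rw [a4]
    have a5 := one_sub_pow_ne_s17 q hq (4 * n + 1) (by omega)
    generalize 1 - q ^ (4 * n + 1) = w at *
    field_simp
    ring
  · refine Finset.sum_congr rfl fun n hn => ?_
    rw [Finset.mem_range] at hn
    obtain ⟨m, rfl⟩ : ∃ m, L = n + m := ⟨L - n, by omega⟩
    have a2 : 2 * (n + m) + 1 - (n + m + 1 + n) = m := by omega
    have a3 : n + m - n = m := by omega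
    rw [a2, a3]
    have a4 : (q ^ 4) ^ (n + m + 1 + n) - q * (q ^ 4) ^ (n + m) =
      -(q * (q ^ 4) ^ (n + m) * (1 - q ^ (4 * n + 3))) := by ring
    rw [a4]
    have a5 := one_sub_pow_ne_s17 q hq (4 * n + 3) (by omega)
    generalize 1 - q ^ (4 * n + 3) = w at *
    field_simp
    ring

lemma tannery_conv (u v g : ℕ → ℂ) (U V : ℂ) (hu : Filter.Tendsto u Filter.atTop (nhds U))
    (hv : Filter.Tendsto v Filter.atTop (nhds V)) (hg : Summable fun n => ‖g n‖) :
    Filter.Tendsto (fun L : ℕ => ∑ n ∈ Finset.range (L + 1), u (L - n) * v (L + 1 + n) * g n)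
      Filter.atTop (nhds (U * V * ∑' n, g n)) := by
  obtain ⟨C, hC⟩ := (Metric.isBounded_range_of_tendsto u hu).exists_norm_le
  obtain ⟨D, hD⟩ := (Metric.isBounded_range_of_tendsto v hv).exists_norm_le
  have hC' : ∀ n, ‖u n‖ ≤ C := fun n => hC _ ⟨n, rfl⟩
  have hD' : ∀ n, ‖v n‖ ≤ D := fun n => hD _ ⟨n, rfl⟩
  have hC0 : 0 ≤ C := (norm_nonneg _).trans (hC' 0)
  have hD0 : 0 ≤ D := (norm_nonneg _).trans (hD' 0)
  have main := tendsto_tsum_of_dominated_convergence (𝓕 := Filter.atTop)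
    (f := fun (L n : ℕ) => if n ∈ Finset.range (L + 1) then u (L - n) * v (L + 1 + n) * g n else 0)
    (g := fun n => U * V * g n) (bound := fun n => C * D * ‖g n‖) (hg.mul_left _) ?_ ?_
  · rw [tsum_mul_left] at main
    refine main.congr fun L => ?_
    rw [tsum_eq_sum (s := Finset.range (L + 1))]
    · exact Finset.sum_congr rfl fun n hn => if_pos hn
    · intro n hn
      exact if_neg hn
  · intro n
    have h1 : Filter.Tendsto (fun L : ℕ => u (L - n)) Filter.atTop (nhds U) :=
      hu.comp (Filter.tendsto_sub_atTop_nat n)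
    have h2 : Filter.Tendsto (fun L : ℕ => v (L + 1 + n)) Filter.atTop (nhds V) := by
      have := hv.comp (Filter.tendsto_add_atTop_nat (1 + n))
      refine this.congr fun L => ?_
      simp [add_assoc]
    refine ((h1.mul h2).mul_const (g n)).congr' ?_
    filter_upwards [Filter.eventually_ge_atTop n] with L hL
    rw [if_pos (Finset.mem_range.2 (by omega))]
  · refine Filter.Eventually.of_forall fun L n => ?_
    split_ifs
    · rw [norm_mul, norm_mul]
      gcongr
      · exact hC' _
      · exact hD' _
    · rw [norm_zero]; positivity

/-- Infinite product `(q^a; q^4)_∞`. -/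
noncomputable def infP (q : ℂ) (a : ℕ) : ℂ := ∏' k : ℕ, (1 - q ^ a * (q ^ 4) ^ k)

lemma norm_pow4_lt (q : ℂ) (hq : ‖q‖ < 1) (n : ℕ) (hn : n ≠ 0) : ‖q ^ n‖ < 1 := by
  rw [norm_pow]; exact pow_lt_one₀ (norm_nonneg _) hq hn

lemma summ_aux (c Q : ℂ) (hQ : ‖Q‖ < 1) : Summable fun k : ℕ => ‖-(c * Q ^ k)‖ := by
  simp only [norm_neg, norm_mul, norm_pow]
  exact (summable_geometric_of_lt_one (norm_nonneg _) hQ).mul_left _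

lemma tendsto_pochF (q : ℂ) (hq : ‖q‖ < 1) (a : ℕ) :
    Filter.Tendsto (pochF (q ^ a) (q ^ 4)) Filter.atTop (nhds (infP q a)) := by
  have h := (multipliable_one_add_of_summable
    (summ_aux (q ^ a) (q ^ 4) (norm_pow4_lt q hq 4 (by norm_num)))).tendsto_prod_tprod_nat
  simp only [← sub_eq_add_neg] at h
  exact h

lemma infP_ne (q : ℂ) (hq : ‖q‖ < 1) (a : ℕ) (ha : a ≠ 0) : infP q a ≠ 0 := by
  have h := tprod_one_add_ne_zero_of_summable (f := fun k : ℕ => -(q ^ a * (q ^ 4) ^ k)) ?_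
    (summ_aux (q ^ a) (q ^ 4) (norm_pow4_lt q hq 4 (by norm_num)))
  · simp only [← sub_eq_add_neg] at h
    exact h
  · intro k
    rw [← sub_eq_add_neg, ← pow_mul, ← pow_add]
    exact one_sub_pow_ne_s17 q hq _ (by omega)

lemma tendsto_eulerF (q : ℂ) (hq : ‖q‖ < 1) :
    Filter.Tendsto (fun m => ∏ k ∈ Finset.range m, (1 - q ^ (k + 1))) Filter.atTop
      (nhds (eulerF q)) := by
  have h := (multipliable_one_add_of_summable (summ_aux q q hq)).tendsto_prod_tprod_nat
  simp only [← sub_eq_add_neg, ← pow_succ'] at h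
  exact h

lemma eulerF_ne_s17 (q : ℂ) (hq : ‖q‖ < 1) : eulerF q ≠ 0 := by
  have h := tprod_one_add_ne_zero_of_summable (f := fun k : ℕ => -(q * q ^ k)) ?_
    (summ_aux q q hq)
  · simp only [← sub_eq_add_neg, ← pow_succ'] at h
    exact h
  · intro k
    rw [← sub_eq_add_neg, ← pow_succ']
    exact one_sub_pow_ne_s17 q hq _ (by omega)

lemma eulerF_four (q : ℂ) : eulerF (q ^ 4) = infP q 4 := by
  unfold eulerF infP
  simp only [pow_succ' (q ^ 4)]

lemma eulerF_two (q : ℂ) (hq : ‖q‖ < 1) : eulerF (q ^ 2) = infP q 2 * infP q 4 := by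
  have h1 := (tendsto_eulerF (q ^ 2) (norm_pow4_lt q hq 2 (by norm_num))).comp
    (Filter.tendsto_id.const_mul_atTop' (r := 2) (by norm_num))
  have h2 := (tendsto_pochF q hq 2).mul (tendsto_pochF q hq 4)
  refine tendsto_nhds_unique h1 (h2.congr fun m => ?_)
  simp only [Function.comp, id]
  induction m with
  | zero => simp [pochF]
  | succ m ih =>
    rw [show 2 * (m + 1) = 2 * m + 1 + 1 by ring, Finset.prod_range_succ, Finset.prod_range_succ,
      ← ih]
    simp only [pochF, Finset.prod_range_succ]
    ring

lemma eulerF_one (q : ℂ) (hq : ‖q‖ < 1) :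
    eulerF q = infP q 1 * infP q 2 * infP q 3 * infP q 4 := by
  have h1 := (tendsto_eulerF q hq).comp
    (Filter.tendsto_id.const_mul_atTop' (r := 4) (by norm_num))
  have h2 := (((tendsto_pochF q hq 1).mul (tendsto_pochF q hq 2)).mul
    (tendsto_pochF q hq 3)).mul (tendsto_pochF q hq 4)
  refine tendsto_nhds_unique h1 (h2.congr fun m => ?_)
  simp only [Function.comp, id]
  induction m with
  | zero => simp [pochF]
  | succ m ih =>
    rw [show 4 * (m + 1) = 4 * m + 1 + 1 + 1 + 1 by ring, Finset.prod_range_succ,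
      Finset.prod_range_succ, Finset.prod_range_succ, Finset.prod_range_succ, ← ih]
    simp only [pochF, Finset.prod_range_succ]
    ring

lemma summ_g (q : ℂ) (hq : ‖q‖ < 1) (e d : ℕ → ℕ) (he : ∀ n, n ≤ e n) (hd : ∀ n, d n ≠ 0) :
    Summable fun n => ‖q ^ e n / (1 - q ^ d n) ^ 2‖ := by
  refine Summable.of_nonneg_of_le (fun n => norm_nonneg _) (fun n => ?_)
    ((summable_geometric_of_lt_one (norm_nonneg q) hq).mul_right (((1 - ‖q‖) ^ 2)⁻¹))
  have h1 : 0 < 1 - ‖q‖ := by linarith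
  have h2 : 1 - ‖q‖ ≤ ‖1 - q ^ d n‖ := by
    have h3 := norm_sub_norm_le (1 : ℂ) (q ^ d n)
    rw [norm_one, norm_pow] at h3
    have h4 : ‖q‖ ^ d n ≤ ‖q‖ := pow_le_of_le_one (norm_nonneg _) hq.le (hd n)
    linarith
  rw [norm_div, norm_pow, norm_pow, div_eq_mul_inv]
  have h5 : ‖q‖ ^ e n ≤ ‖q‖ ^ n := pow_le_pow_of_le_one (norm_nonneg _) hq.le (he n)
  have h6 : (‖1 - q ^ d n‖ ^ 2)⁻¹ ≤ ((1 - ‖q‖) ^ 2)⁻¹ :=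
    inv_anti₀ (by positivity) (pow_le_pow_left₀ h1.le h2 2)
  exact mul_le_mul h5 h6 (by positivity) (by positivity)

lemma lambert_id (q : ℂ) (hq0 : q ≠ 0) (hq : ‖q‖ < 1) :
    (∑' n : ℕ, q ^ (7 * n + 1) / (1 - q ^ (4 * n + 1)) ^ 2) +
      ∑' n : ℕ, q ^ n / (1 - q ^ (4 * n + 3)) ^ 2 =
    eulerF (q ^ 2) ^ 2 * eulerF (q ^ 4) ^ 4 / eulerF q ^ 2 := by
  have hp : ∀ a, a ≠ 0 → infP q a ≠ 0 := infP_ne q hq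
  have p1 := hp 1 (by norm_num)
  have p2 := hp 2 (by norm_num)
  have p3 := hp 3 (by norm_num)
  have p4 := hp 4 (by norm_num)
  have hU : ∀ a, Filter.Tendsto (ratU q a) Filter.atTop (nhds (infP q a / infP q 4)) :=
    fun a => (tendsto_pochF q hq a).div (tendsto_pochF q hq 4) p4
  have t1 := tannery_conv _ _ _ _ _ (hU 3) (hU 1)
    (summ_g q hq (fun n => 7 * n + 1) (fun n => 4 * n + 1) (fun n => by omega) (fun n => by omega))
  have t2 := tannery_conv _ _ _ _ _ (hU 1) (hU 3)
    (summ_g q hq (fun n => n) (fun n => 4 * n + 3) (fun n => le_rfl) (fun n => by omega))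
  have t3 := ((tendsto_pochF q hq 4).pow 2).div
    (((tendsto_pochF q hq 1).comp (Filter.tendsto_add_atTop_nat 1)).mul
      ((tendsto_pochF q hq 3).comp (Filter.tendsto_add_atTop_nat 1))) (mul_ne_zero p1 p3)
  have t4 := tendsto_nhds_unique (t1.add t2) (t3.congr fun L => by
    rw [Pi.div_apply]
    simp only [Function.comp]
    rw [← finite_id_s17 q hq0 hq L]
    congr 1
    refine Finset.sum_congr rfl fun n _ => ?_
    ring)
  rw [eulerF_four, eulerF_two q hq, eulerF_one q hq]
  generalize (∑' n : ℕ, q ^ (7 * n + 1) / (1 - q ^ (4 * n + 1)) ^ 2) = A at *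
  generalize (∑' n : ℕ, q ^ n / (1 - q ^ (4 * n + 3)) ^ 2) = B at *
  field_simp at t4 ⊢
  linear_combination t4

lemma psi_split (x : ℂ) (hx : ‖x‖ < 1) :
    Psi2222 x = x ^ 3 * ((∑' n : ℕ, (x ^ 4) ^ (7 * n + 1) / (1 - (x ^ 4) ^ (4 * n + 1)) ^ 2) +
      ∑' n : ℕ, (x ^ 4) ^ n / (1 - (x ^ 4) ^ (4 * n + 3)) ^ 2) := by
  set q := x ^ 4 with hq
  have hq1 : ‖q‖ < 1 := norm_pow4_lt x hx 4 (by norm_num)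
  set r := ‖x‖ with hr
  have hr0 : 0 ≤ r := norm_nonneg x
  have hs : Summable fun n : ℕ => ((n : ℝ) + 1) * r ^ n := by
    have h1 := summable_pow_mul_geometric_of_norm_lt_one 1 (r := r) (by simpa [hr] using hx)
    have h2 := summable_geometric_of_lt_one hr0 hx
    refine (h1.add h2).congr fun n => ?_
    ring
  have hs2 := Summable.mul_of_nonneg hs hs (fun n => by positivity) (fun n => by positivity)
  have gen : ∀ c : ℕ × ℕ → ℂ, (∀ p, ‖c p‖ ≤ ((p.1 : ℝ) + 1) * ((p.2 : ℝ) + 1)) →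
      Summable fun p : ℕ × ℕ => c p * x ^ ((4 * p.1 + 1) * (4 * p.2 + 3)) := by
    intro c hc
    refine Summable.of_norm_bounded hs2 fun p => ?_
    rw [norm_mul, norm_pow]
    have h1 : r ^ ((4 * p.1 + 1) * (4 * p.2 + 3)) ≤ r ^ (p.1 + p.2) :=
      pow_le_pow_of_le_one hr0 hx.le (by nlinarith)
    calc ‖c p‖ * r ^ ((4 * p.1 + 1) * (4 * p.2 + 3))
        ≤ (((p.1 : ℝ) + 1) * ((p.2 : ℝ) + 1)) * r ^ (p.1 + p.2) := by
          gcongr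
          exact hc p
      _ = _ := by rw [pow_add]; ring
  have s1 := gen (fun p => (p.2 : ℂ)) (fun p => by
    simp only [Complex.norm_natCast]
    have := (Nat.cast_nonneg p.1 : (0 : ℝ) ≤ p.1)
    have := (Nat.cast_nonneg p.2 : (0 : ℝ) ≤ p.2)
    nlinarith)
  have s2 := gen (fun p => (p.1 : ℂ) + 1) (fun p => by
    refine (norm_add_le _ _).trans ?_
    simp only [Complex.norm_natCast, norm_one]
    have := (Nat.cast_nonneg p.1 : (0 : ℝ) ≤ p.1)
    have := (Nat.cast_nonneg p.2 : (0 : ℝ) ≤ p.2)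
    nlinarith)
  have e : Psi2222 x = (∑' p : ℕ × ℕ, (p.2 : ℂ) * x ^ ((4 * p.1 + 1) * (4 * p.2 + 3))) +
      ∑' p : ℕ × ℕ, ((p.1 : ℂ) + 1) * x ^ ((4 * p.1 + 1) * (4 * p.2 + 3)) := by
    rw [← s1.tsum_add s2]
    unfold Psi2222
    refine tsum_congr fun p => ?_
    ring
  rw [e, s1.tsum_prod, s2.tsum_prod, mul_add, ← tsum_mul_left, ← tsum_mul_left]
  congr 1
  · refine tsum_congr fun n => ?_
    have ht : ‖q ^ (4 * n + 1)‖ < 1 := norm_pow4_lt q hq1 _ (by omega)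
    have h := tsum_coe_mul_geometric_of_norm_lt_one ht
    have : ∀ l : ℕ, (l : ℂ) * x ^ ((4 * n + 1) * (4 * l + 3)) =
        (x ^ 3 * q ^ (3 * n)) * ((l : ℂ) * (q ^ (4 * n + 1)) ^ l) := by
      intro l
      rw [hq]; ring
    simp only [this]
    rw [tsum_mul_left, h]
    ring
  · rw [Summable.tsum_comm (f := fun (l n : ℕ) =>
      ((n : ℂ) + 1) * x ^ ((4 * n + 1) * (4 * l + 3))) (s2.prod_symm)]
    refine tsum_congr fun n => ?_
    have ht : ‖q ^ (4 * n + 3)‖ < 1 := norm_pow4_lt q hq1 _ (by omega)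
    have h := ((hasSum_coe_mul_geometric_of_norm_lt_one ht).add
      (hasSum_geometric_of_norm_lt_one ht)).tsum_eq
    have : ∀ l : ℕ, ((l : ℂ) + 1) * x ^ ((4 * l + 1) * (4 * n + 3)) =
        (x ^ 3 * q ^ n) * ((l : ℂ) * (q ^ (4 * n + 3)) ^ l + (q ^ (4 * n + 3)) ^ l) := by
      intro l
      rw [hq]; ring
    simp only [this]
    rw [tsum_mul_left, h]
    have a5 := one_sub_pow_ne_s17 q hq1 (4 * n + 3) (by omega)
    have a6 : q ^ (4 * n + 3) / (1 - q ^ (4 * n + 3)) ^ 2 + (1 - q ^ (4 * n + 3))⁻¹ =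
        1 / (1 - q ^ (4 * n + 3)) ^ 2 := by
      generalize q ^ (4 * n + 3) = w at *
      field_simp
      ring
    rw [a6]
    ring

/-- `Ψ(x) = x³ F(x⁸)²F(x¹⁶)⁴/F(x⁴)²`, i.e. `φ = η(q_d⁸)²η(q_d¹⁶)⁴/η(q_d⁴)²`. -/
theorem psi2222_eq_eta_quotient (x : ℂ) (hx : ‖x‖ < 1) :
    Psi2222 x = x ^ 3 * eulerF (x ^ 8) ^ 2 * eulerF (x ^ 16) ^ 4 / eulerF (x ^ 4) ^ 2 := by
  rw [psi_split x hx]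
  by_cases h0 : x = 0
  · subst h0; simp
  · rw [lambert_id (x ^ 4) (pow_ne_zero _ h0) (norm_pow4_lt x hx 4 (by norm_num)), ← pow_mul,
      ← pow_mul]
    ring
end

section
/- For |x| < 1 let Φ(x) = Σ_{k,l≥0} (4k+1) x^{(4k+1)(4l+1)} + Σ_{k,l≥0} (4k+3) x^{(4k+3)(4l+3)} and F(x) = ∏_{n=1}^∞ (1 − xⁿ). Then for every complex x with |x| < 1, Φ(x) = x · F(x⁸)^{14} / ( F(x⁴)⁶ F(x^{16})⁴ ). (This expresses the coefficient of (xy)²+(xw)²+(zy)²+(zw)² in the open Gromov–Witten potential of ℙ¹_{2,2,2,2} as the eta quotient η(q_d⁸)^{14}/(η(q_d⁴)⁶η(q_d^{16})⁴), hence as a modular form for Γ(2) in the Kähler parameter q = q_d⁸.) -/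
open scoped BigOperators

open Filter Topology

namespace PhiAux

/-- Finite product `∏_{i<n} (1 - e q^{2i+1})`. -/
noncomputable def pr (q e : ℂ) (n : ℕ) : ℂ := ∏ i ∈ Finset.range n, (1 - e * q ^ (2 * i + 1))

/-- Auxiliary power of `q`. -/
noncomputable def pw (q : ℂ) (n : ℕ) : ℂ := ∏ i ∈ Finset.range n, q ^ (2 * i)

lemma pw_ne_zero {q : ℂ} (hq : q ≠ 0) (n : ℕ) : pw q n ≠ 0 :=
  Finset.prod_ne_zero_iff.mpr fun _ _ => pow_ne_zero _ hq

lemma prod_low {q : ℂ} (hq : q ≠ 0) (a d e : ℂ) (m : ℕ) (h : a * q = d * e * q ^ (2 * m)) :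
    ∏ i ∈ Finset.range m, (a - d * q ^ (2 * i)) = (-d) ^ m * pw q m * pr q e m := by
  have h1 : pr q e m = ∏ i ∈ Finset.range m, (1 - e * q ^ (2 * (m - 1 - i) + 1)) := by
    unfold pr
    rw [← Finset.prod_range_reflect]
  rw [h1, pw, ← Finset.card_range m, ← Finset.prod_const, Finset.card_range,
    ← Finset.prod_mul_distrib, ← Finset.prod_mul_distrib]
  refine Finset.prod_congr rfl fun i hi => ?_
  have hi' := Finset.mem_range.mp hi
  obtain ⟨l, rfl⟩ : ∃ l, m = i + 1 + l := ⟨m - i - 1, by omega⟩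
  have : i + 1 + l - 1 - i = l := by omega
  rw [this]
  have ha : a = d * e * q ^ (2 * i + 2 * l + 1) := by
    apply mul_right_cancel₀ hq
    rw [h]; ring
  rw [ha]; ring

lemma prod_high (q a e : ℂ) (j : ℕ) :
    ∏ l ∈ Finset.range j, (a - a * e * q ^ (2 * l + 1)) = a ^ j * pr q e j := by
  rw [pr, ← Finset.card_range j, ← Finset.prod_const, Finset.card_range,
    ← Finset.prod_mul_distrib]
  exact Finset.prod_congr rfl fun i _ => by ring

lemma prod_erase_mid (f : ℕ → ℂ) (m j : ℕ) :
    ∏ k ∈ (Finset.range (m + j + 1)).erase m, f k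
      = (∏ k ∈ Finset.range m, f k) * ∏ l ∈ Finset.range j, f (m + 1 + l) := by
  have h : (Finset.range (m + j + 1)).erase m
      = (Finset.range m) ∪ (Finset.range j).map (addLeftEmbedding (m + 1)) := by
    ext k
    simp only [Finset.mem_erase, Finset.mem_range, Finset.mem_union, Finset.mem_map,
      addLeftEmbedding_apply]
    constructor
    · intro hk
      by_cases h : k < m
      · exact Or.inl h
      · exact Or.inr ⟨k - (m + 1), by omega, by omega⟩
    · rintro (h | ⟨a, ha, rfl⟩) <;> omega
  rw [h, Finset.prod_union, Finset.prod_map]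
  · rfl
  · rw [Finset.disjoint_left]
    intro k hk
    simp only [Finset.mem_range, Finset.mem_map, addLeftEmbedding_apply] at hk ⊢
    rintro ⟨a, ha, rfl⟩
    omega

lemma den_erase {q : ℂ} (hq : q ≠ 0) (m j : ℕ) :
    ∏ k ∈ (Finset.range (m + j + 1)).erase m, (q ^ (2 * m) - q ^ (2 * k))
      = (-1) ^ m * pw q m * pr q q m * ((q ^ (2 * m)) ^ j * pr q q j) := by
  rw [prod_erase_mid]
  congr 1
  · rw [← prod_low hq (q ^ (2 * m)) 1 q m (by ring)]
    simp
  · rw [← prod_high]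
    exact Finset.prod_congr rfl fun i _ => by ring

lemma num_full {q : ℂ} (hq : q ≠ 0) (m j : ℕ) :
    ∏ i ∈ Finset.range (m + j), (q ^ (2 * m) - q ^ (2 * i + 1))
      = (-q) ^ m * pw q m * pr q 1 m * ((q ^ (2 * m)) ^ j * pr q 1 j) := by
  rw [Finset.prod_range_add]
  congr 1
  · rw [← prod_low hq (q ^ (2 * m)) q 1 m (by ring)]
    exact Finset.prod_congr rfl fun i _ => by ring
  · rw [← prod_high]
    exact Finset.prod_congr rfl fun i _ => by ring

lemma pow_ne_one {q : ℂ} (hq1 : ‖q‖ < 1) {n : ℕ} (hn : n ≠ 0) : q ^ n ≠ 1 := by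
  intro h
  have := congrArg norm h
  rw [norm_pow, norm_one] at this
  exact absurd this (pow_lt_one₀ (norm_nonneg _) hq1 hn).ne

lemma norm_zpow_ne {q : ℂ} (hq : q ≠ 0) (hq1 : ‖q‖ < 1) {m n : ℕ} {u : ℂ} (hu : ‖u‖ = 1)
    (hmn : m ≠ n) : u * q ^ m ≠ q ^ n := by
  intro h
  have := congrArg norm h
  rw [norm_mul, hu, one_mul, norm_pow, norm_pow] at this
  exact hmn (pow_right_injective₀ (norm_pos_iff.mpr hq) hq1.ne this)

lemma pr_ne_zero {q : ℂ} (hq1 : ‖q‖ < 1) {e : ℂ} (he : ‖e‖ ≤ 1) (n : ℕ) : pr q e n ≠ 0 := by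
  refine Finset.prod_ne_zero_iff.mpr fun i _ h => ?_
  have := congrArg norm (sub_eq_zero.mp h)
  rw [norm_mul, norm_pow, norm_one] at this
  have h2 : ‖q‖ ^ (2 * i + 1) < 1 := pow_lt_one₀ (norm_nonneg _) hq1 (by omega)
  have h3 := mul_le_of_le_one_left (pow_nonneg (norm_nonneg q) (2 * i + 1)) he
  linarith

lemma lagrange {q : ℂ} (hq : q ≠ 0) (hq1 : ‖q‖ < 1) (M : ℕ) (s : Finset ℕ) (hs : s.card ≤ M)
    (b : ℂ) (hb : ∀ m, b ≠ q ^ (2 * m)) :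
    (∏ i ∈ s, (b - q ^ (2 * i + 1))) / ∏ k ∈ Finset.range (M + 1), (b - q ^ (2 * k))
      = ∑ m ∈ Finset.range (M + 1),
        (∏ k ∈ (Finset.range (M + 1)).erase m, (q ^ (2 * m) - q ^ (2 * k)))⁻¹ *
          (b - q ^ (2 * m))⁻¹ * ∏ i ∈ s, (q ^ (2 * m) - q ^ (2 * i + 1)) := by
  have hinj : Set.InjOn (fun m : ℕ => q ^ (2 * m)) (Finset.range (M + 1) : Finset ℕ) := by
    intro m _ n _ h
    by_contra hmn
    exact norm_zpow_ne hq hq1 (u := 1) (by simp) (m := 2 * m) (n := 2 * n) (by omega)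
      (by simpa using h)
  let p : Polynomial ℂ := ∏ i ∈ s, (Polynomial.X - Polynomial.C (q ^ (2 * i + 1)))
  have hp : ∀ x, p.eval x = ∏ i ∈ s, (x - q ^ (2 * i + 1)) := by
    intro x; simp [p, Polynomial.eval_prod]
  have hdeg : p.degree < (Finset.range (M + 1)).card := by
    simp only [p, Polynomial.degree_prod, Polynomial.degree_X_sub_C, Finset.card_range]
    simp only [Finset.sum_const, nsmul_eq_mul, mul_one]
    exact_mod_cast Nat.lt_succ_of_le hs
  have h1 := Lagrange.eq_interpolate_of_eval_eq (r := fun m => p.eval (q ^ (2 * m))) hinj hdeg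
    (fun i _ => rfl)
  have h2 := congrArg (Polynomial.eval b) h1
  rw [Lagrange.eval_interpolate_not_at_node _ (fun i _ => hb i), hp, Lagrange.eval_nodal] at h2
  rw [h2, mul_div_cancel_left₀]
  · refine Finset.sum_congr rfl fun m _ => ?_
    rw [Lagrange.nodalWeight, hp, Finset.prod_inv_distrib]
  · exact Finset.prod_ne_zero_iff.mpr fun k _ => sub_ne_zero.mpr (hb k)

/-- ratio of the products -/
noncomputable def rr (q : ℂ) (n : ℕ) : ℂ := pr q 1 n / pr q q n

lemma coef {q : ℂ} (hq : q ≠ 0) (hq1 : ‖q‖ < 1) {M m : ℕ} (hm : m ≤ M) :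
    (∏ k ∈ (Finset.range (M + 1)).erase m, (q ^ (2 * m) - q ^ (2 * k)))⁻¹ *
      ∏ i ∈ Finset.range M, (q ^ (2 * m) - q ^ (2 * i + 1)) = q ^ m * rr q m * rr q (M - m) := by
  obtain ⟨j, rfl⟩ := Nat.exists_eq_add_of_le hm
  rw [den_erase hq, num_full hq, Nat.add_sub_cancel_left, rr, rr]
  have h1 := pr_ne_zero hq1 hq1.le m
  have h2 := pr_ne_zero hq1 hq1.le j
  have h3 := pw_ne_zero hq m
  rw [neg_pow q]
  field_simp

lemma finA {q : ℂ} (hq : q ≠ 0) (hq1 : ‖q‖ < 1) (N : ℕ) :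
    ∑ m ∈ Finset.range (2 * N + 0 + 1),
      (fun n : ℤ => q ^ n / (1 + q ^ (2 * n))) ((m : ℤ) - N - (0 : ℕ)) * rr q m * rr q (2 * N + 0 - m)
      = 1 / 2 * (pr q (-1) N / pr q (-q) N) ^ 2 := by
  have hb : ∀ m : ℕ, -q ^ (2 * N) ≠ q ^ (2 * m) := by
    intro m
    by_cases h : N = m
    · subst h
      intro h
      have : q ^ (2 * N) = 0 := by linear_combination (-1 / 2 : ℂ) * h
      exact pow_ne_zero _ hq this
    · simpa using norm_zpow_ne hq hq1 (u := -1) (by simp) (m := 2 * N) (n := 2 * m) (by omega)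
  have h := lagrange hq hq1 (2 * N) (Finset.range (2 * N)) (by simp) (-q ^ (2 * N)) hb
  have hnum : ∏ i ∈ Finset.range (2 * N), (-q ^ (2 * N) - q ^ (2 * i + 1))
      = ((-q) ^ N * pw q N * pr q (-1) N) * ((-q ^ (2 * N)) ^ N * pr q (-1) N) := by
    rw [two_mul N, Finset.prod_range_add, ← two_mul]
    congr 1
    · rw [← prod_low hq (-q ^ (2 * N)) q (-1) N (by ring)]
      exact Finset.prod_congr rfl fun i _ => by ring
    · rw [← prod_high]
      exact Finset.prod_congr rfl fun i _ => by ring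
  have hden : ∏ k ∈ Finset.range (2 * N + 1), (-q ^ (2 * N) - q ^ (2 * k))
      = ((-1) ^ N * pw q N * pr q (-q) N) * ((-2 * q ^ (2 * N)) *
        ((-q ^ (2 * N)) ^ N * pr q (-q) N)) := by
    rw [show 2 * N + 1 = N + (N + 1) by ring, Finset.prod_range_add, Finset.prod_range_succ']
    congr 1
    · rw [← prod_low hq (-q ^ (2 * N)) 1 (-q) N (by ring)]
      exact Finset.prod_congr rfl fun i _ => by ring
    · rw [← prod_high, mul_comm]
      congr 1
      · simp; ring
      · exact Finset.prod_congr rfl fun i _ => by ring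
  rw [hnum, hden] at h
  have h1 : pr q (-q) N ≠ 0 := pr_ne_zero hq1 (by simpa using hq1.le) N
  have h3 := pw_ne_zero hq N
  have hL : ((-q) ^ N * pw q N * pr q (-1) N) * ((-q ^ (2 * N)) ^ N * pr q (-1) N) /
      (((-1) ^ N * pw q N * pr q (-q) N) * ((-2 * q ^ (2 * N)) *
        ((-q ^ (2 * N)) ^ N * pr q (-q) N))) =
        -(q ^ N)⁻¹ * (1 / 2 * (pr q (-1) N / pr q (-q) N) ^ 2) := by
    rw [neg_pow q, two_mul N, pow_add]
    have : (-(q ^ N * q ^ N)) ≠ 0 := neg_ne_zero.mpr (mul_ne_zero (pow_ne_zero _ hq) (pow_ne_zero _ hq))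
    have h5 := pow_ne_zero N this
    have h6 : (-1 : ℂ) ^ N ≠ 0 := pow_ne_zero _ (by norm_num)
    generalize (-(q ^ N * q ^ N)) ^ N = Z at *
    generalize (-1 : ℂ) ^ N = Y at *
    field_simp
  rw [hL] at h
  have h7 : 1 / 2 * (pr q (-1) N / pr q (-q) N) ^ 2 = -(q ^ N) * (-(q ^ N)⁻¹ * (1 / 2 * (pr q (-1) N / pr q (-q) N) ^ 2)) := by
    have := pow_ne_zero N hq
    field_simp
  rw [h7, h, Finset.mul_sum]
  refine Finset.sum_congr rfl fun m hm => ?_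
  rw [mul_right_comm (_⁻¹), coef hq hq1 (by have := Finset.mem_range.mp hm; omega)]
  have e1 : q ^ ((m : ℤ) - N - (0 : ℕ)) = q ^ m / q ^ N := by
    rw [Nat.cast_zero, sub_zero, zpow_sub₀ hq]; simp
  have e2 : q ^ (2 * ((m : ℤ) - N - (0 : ℕ))) = (q ^ m / q ^ N) ^ 2 := by
    rw [mul_comm, zpow_mul, e1]; norm_cast
  simp only [e1, e2]
  have h8 : q ^ (2 * N) + q ^ (2 * m) ≠ 0 := by
    intro h9
    exact hb m (by linear_combination -h9)
  have h9 : (q ^ N) ^ 2 + (q ^ m) ^ 2 ≠ 0 := by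
    rw [← pow_mul, ← pow_mul, mul_comm N, mul_comm m]; exact h8
  have h10 : -(q ^ N) ^ 2 - (q ^ m) ^ 2 ≠ 0 := by
    intro h; apply h9; linear_combination -h
  rw [mul_comm 2 N, mul_comm 2 m, pow_mul, pow_mul]
  have h11 := pow_ne_zero N hq
  have h12 : 1 + (q ^ m / q ^ N) ^ 2 = ((q ^ N) ^ 2 + (q ^ m) ^ 2) / (q ^ N) ^ 2 := by
    field_simp
  have h13 : -(q ^ N) ^ 2 - (q ^ m) ^ 2 = -((q ^ N) ^ 2 + (q ^ m) ^ 2) := by ring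
  rw [h12, h13]
  simp only [Nat.add_zero]
  rw [mul_comm N 2]
  field_simp

lemma finB {q : ℂ} (hq : q ≠ 0) (hq1 : ‖q‖ < 1) (N : ℕ) :
    ∑ m ∈ Finset.range (2 * N + 1 + 1),
      (fun n : ℤ => q ^ n / (1 - q ^ (2 * n + 1)) ^ 2) ((m : ℤ) - N - (1 : ℕ)) * rr q m
        * rr q (2 * N + 1 - m)
      = (pr q q N / pr q 1 (N + 1)) ^ 2 := by
  have hb : ∀ m : ℕ, q ^ (2 * N + 1) ≠ q ^ (2 * m) := by
    intro m
    simpa using norm_zpow_ne hq hq1 (u := 1) (by simp) (m := 2 * N + 1) (n := 2 * m) (by omega)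
  have h := lagrange hq hq1 (2 * N + 1) ((Finset.range (2 * N + 1)).erase N)
    (Finset.card_erase_le.trans (by rw [Finset.card_range]))
    (q ^ (2 * N + 1)) hb
  have hnum : ∏ i ∈ (Finset.range (2 * N + 1)).erase N, (q ^ (2 * N + 1) - q ^ (2 * i + 1))
      = ((-q) ^ N * pw q N * pr q q N) * ((q ^ (2 * N + 1)) ^ N * pr q q N) := by
    rw [two_mul N, prod_erase_mid, ← two_mul]
    congr 1
    · rw [← prod_low hq (q ^ (2 * N + 1)) q q N (by ring)]
      exact Finset.prod_congr rfl fun i _ => by ring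
    · rw [← prod_high]
      exact Finset.prod_congr rfl fun i _ => by ring
  have hden : ∏ k ∈ Finset.range (2 * N + 1 + 1), (q ^ (2 * N + 1) - q ^ (2 * k))
      = ((-1) ^ (N + 1) * (pw q N * q ^ (2 * N)) * pr q 1 (N + 1)) *
        ((q ^ (2 * N + 1)) ^ (N + 1) * pr q 1 (N + 1)) := by
    rw [show 2 * N + 1 + 1 = (N + 1) + (N + 1) by ring, Finset.prod_range_add]
    congr 1
    · have : pw q N * q ^ (2 * N) = pw q (N + 1) := by rw [pw, pw, Finset.prod_range_succ]
      rw [this, ← prod_low hq (q ^ (2 * N + 1)) 1 1 (N + 1) (by ring)]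
      exact Finset.prod_congr rfl fun i _ => by ring
    · rw [← prod_high]
      exact Finset.prod_congr rfl fun i _ => by ring
  rw [hnum, hden] at h
  have h1 : pr q 1 (N + 1) ≠ 0 := pr_ne_zero hq1 (by simp) (N + 1)
  have h3 := pw_ne_zero hq N
  have h11 := pow_ne_zero N hq
  have hL : ((-q) ^ N * pw q N * pr q q N) * ((q ^ (2 * N + 1)) ^ N * pr q q N) /
      (((-1) ^ (N + 1) * (pw q N * q ^ (2 * N)) * pr q 1 (N + 1)) *
        ((q ^ (2 * N + 1)) ^ (N + 1) * pr q 1 (N + 1))) =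
        -((q ^ N) ^ 3 * q)⁻¹ * (pr q q N / pr q 1 (N + 1)) ^ 2 := by
    rw [neg_pow q, pow_succ (q ^ (2 * N + 1)), pow_succ (-1 : ℂ)]
    have h5 : (q ^ (2 * N + 1)) ^ N ≠ 0 := pow_ne_zero _ (pow_ne_zero _ hq)
    have h6 : (-1 : ℂ) ^ N ≠ 0 := pow_ne_zero _ (by norm_num)
    generalize (q ^ (2 * N + 1)) ^ N = Z at *
    generalize (-1 : ℂ) ^ N = Y at *
    rw [pow_succ q, mul_comm 2 N, pow_mul]
    generalize q ^ N = X at *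
    field_simp
  rw [hL] at h
  have h7 : (pr q q N / pr q 1 (N + 1)) ^ 2 =
      -((q ^ N) ^ 3 * q) * (-((q ^ N) ^ 3 * q)⁻¹ * (pr q q N / pr q 1 (N + 1)) ^ 2) := by
    field_simp
  rw [h7, h, Finset.mul_sum]
  refine Finset.sum_congr rfl fun m hm => ?_
  have hne : q ^ (2 * N + 1) - q ^ (2 * m) ≠ 0 := sub_ne_zero.mpr (hb m)
  have hne' : q ^ (2 * m) - q ^ (2 * N + 1) ≠ 0 := sub_ne_zero.mpr (hb m).symm
  have hpe : ∏ i ∈ (Finset.range (2 * N + 1)).erase N, (q ^ (2 * m) - q ^ (2 * i + 1))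
      = (∏ i ∈ Finset.range (2 * N + 1), (q ^ (2 * m) - q ^ (2 * i + 1))) /
        (q ^ (2 * m) - q ^ (2 * N + 1)) := by
    rw [eq_div_iff hne', mul_comm]
    exact Finset.mul_prod_erase _ (fun i => q ^ (2 * m) - q ^ (2 * i + 1))
      (Finset.mem_range.mpr (by omega))
  rw [hpe, mul_right_comm (_⁻¹), ← mul_div_assoc,
    coef hq hq1 (by have := Finset.mem_range.mp hm; omega)]
  have e1 : q ^ ((m : ℤ) - N - (1 : ℕ)) = q ^ m / (q ^ N * q) := by
    rw [zpow_sub₀ hq, zpow_sub₀ hq]; simp [div_div]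
  have e2 : q ^ (2 * ((m : ℤ) - N - (1 : ℕ)) + 1) = q ^ (2 * m) / q ^ (2 * N + 1) := by
    rw [← zpow_natCast q (2 * m), ← zpow_natCast q (2 * N + 1), ← zpow_sub₀ hq]
    congr 1; push_cast; ring
  simp only [e1, e2]
  have h12 : 1 - q ^ (2 * m) / q ^ (2 * N + 1)
      = (q ^ (2 * N + 1) - q ^ (2 * m)) / ((q ^ N) ^ 2 * q) := by
    rw [← pow_mul, mul_comm N 2, ← pow_succ]; field_simp
  have h13 : q ^ (2 * m) - q ^ (2 * N + 1) = -(q ^ (2 * N + 1) - q ^ (2 * m)) := by ring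
  rw [h12, h13]
  generalize q ^ (2 * N + 1) - q ^ (2 * m) = D at *
  field_simp

/-- Extension by zero of a sequence to the integers. -/
noncomputable def ez (r : ℕ → ℂ) (k : ℤ) : ℂ := if 0 ≤ k then r k.toNat else 0

lemma tannery (g : ℤ → ℂ) (hg : Summable g) (r : ℕ → ℂ) (R : ℂ) (hr : Tendsto r atTop (𝓝 R))
    (e : ℕ) :
    Tendsto (fun N : ℕ => ∑ m ∈ Finset.range (2 * N + e + 1),
      g ((m : ℤ) - N - e) * r m * r (2 * N + e - m)) atTop (𝓝 ((∑' n, g n) * R * R)) := by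
  obtain ⟨C, hC⟩ : ∃ C, ∀ n, ‖r n‖ ≤ C := by
    obtain ⟨C, hC⟩ := (Metric.isBounded_range_of_tendsto r hr).exists_norm_le
    exact ⟨C, fun n => hC _ ⟨n, rfl⟩⟩
  have hC0 : 0 ≤ C := (norm_nonneg _).trans (hC 0)
  have hez : ∀ k, ‖ez r k‖ ≤ C := by
    intro k
    unfold ez
    split_ifs
    · exact hC _
    · simpa using hC0
  have hlim : ∀ u : ℕ → ℤ, Tendsto u atTop atTop →
      Tendsto (fun N => ez r (u N)) atTop (𝓝 R) := by
    intro u hu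
    have h1 : Tendsto (fun N => r (u N).toNat) atTop (𝓝 R) := by
      refine hr.comp ?_
      rw [tendsto_atTop] at hu ⊢
      intro b
      filter_upwards [hu b] with N hN
      omega
    refine h1.congr' ?_
    filter_upwards [hu.eventually_ge_atTop 0] with N hN
    rw [ez, if_pos hN]
  have key : ∀ N : ℕ, ∑ m ∈ Finset.range (2 * N + e + 1),
      g ((m : ℤ) - N - e) * r m * r (2 * N + e - m)
      = ∑' n : ℤ, g n * ez r (N + e + n) * ez r (N - n) := by
    intro N
    have hinj : Function.Injective (fun m : ℕ => (m : ℤ) - N - e) := by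
      intro a b h
      simp only at h
      omega
    rw [tsum_eq_sum (s := (Finset.range (2 * N + e + 1)).map ⟨_, hinj⟩), Finset.sum_map]
    · refine Finset.sum_congr rfl fun m hm => ?_
      have hm' := Finset.mem_range.mp hm
      simp only [Function.Embedding.coeFn_mk]
      rw [ez, ez, if_pos (by omega), if_pos (by omega)]
      congr 3
      · omega
      · omega
    · intro n hn
      by_cases h1 : 0 ≤ (N : ℤ) + e + n
      · by_cases h2 : 0 ≤ (N : ℤ) - n
        · exfalso
          apply hn
          simp only [Finset.mem_map, Finset.mem_range, Function.Embedding.coeFn_mk]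
          exact ⟨(N + e + n).toNat, by omega, by omega⟩
        · rw [ez, ez, if_neg h2, mul_zero]
      · rw [ez, if_neg h1, mul_zero, zero_mul]
  simp_rw [key]
  rw [← tsum_mul_right, ← tsum_mul_right]
  refine tendsto_tsum_of_dominated_convergence (bound := fun n => ‖g n‖ * C * C)
    ((hg.norm.mul_right C).mul_right C) ?_ ?_
  · intro n
    refine (tendsto_const_nhds.mul (hlim _ ?_)).mul (hlim _ ?_)
    · rw [tendsto_atTop]
      intro b
      filter_upwards [eventually_ge_atTop (b - e - n).toNat] with N hN
      omega
    · rw [tendsto_atTop]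
      intro b
      filter_upwards [eventually_ge_atTop (b + n).toNat] with N hN
      omega
  · refine Eventually.of_forall fun N n => ?_
    rw [norm_mul, norm_mul]
    gcongr
    · exact hez _
    · exact hez _

lemma summable_geo {q : ℂ} (hq1 : ‖q‖ < 1) (h : ℕ → ℂ) (R : ℂ) (hh : Tendsto h atTop (𝓝 R)) :
    Summable fun n => q ^ n * h n := by
  obtain ⟨C, hC⟩ := (Metric.isBounded_range_of_tendsto h hh).exists_norm_le
  refine Summable.of_norm_bounded (g := fun n => ‖q‖ ^ n * C)
    ((summable_geometric_of_lt_one (norm_nonneg _) hq1).mul_right C) fun n => ?_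
  rw [norm_mul, norm_pow]
  gcongr
  exact hC _ ⟨n, rfl⟩

lemma tendsto_pow_lin {q : ℂ} (hq1 : ‖q‖ < 1) (a : ℕ) :
    Tendsto (fun n : ℕ => q ^ (2 * n + a)) atTop (𝓝 0) := by
  refine (tendsto_pow_atTop_nhds_zero_of_norm_lt_one hq1).comp ?_
  rw [tendsto_atTop]
  intro b
  filter_upwards [eventually_ge_atTop b] with N hN
  omega

lemma one_add_pow_ne {q : ℂ} (hq1 : ‖q‖ < 1) (n : ℕ) : 1 + q ^ n ≠ 0 := by
  by_cases hn : n = 0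
  · subst hn; norm_num
  · intro h
    have h1 : q ^ n = -1 := by linear_combination h
    have := congrArg norm h1
    rw [norm_pow, norm_neg, norm_one] at this
    exact absurd this (pow_lt_one₀ (norm_nonneg _) hq1 hn).ne

lemma summable_A {q : ℂ} (hq : q ≠ 0) (hq1 : ‖q‖ < 1) :
    Summable (fun n : ℤ => q ^ n / (1 + q ^ (2 * n))) := by
  have base : ∀ a : ℕ, Summable fun n : ℕ => q ^ (n + a) / (1 + q ^ (2 * (n + a))) := by
    intro a
    have h := summable_geo hq1 (fun n => q ^ a * (1 + q ^ (2 * n + 2 * a))⁻¹) (q ^ a * (1 + 0)⁻¹)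
      (tendsto_const_nhds.mul ((tendsto_const_nhds.add (tendsto_pow_lin hq1 _)).inv₀ (by norm_num)))
    refine h.congr fun n => ?_
    rw [mul_add, pow_add]
    ring
  refine Summable.of_nat_of_neg_add_one ?_ ?_
  · refine (base 0).congr fun n => ?_
    norm_cast
  · refine (base 1).congr fun n => ?_
    have e1 : q ^ (-((n : ℤ) + 1)) = (q ^ (n + 1))⁻¹ := by
      rw [zpow_neg]; norm_cast
    have e2 : q ^ (2 * -((n : ℤ) + 1)) = ((q ^ (n + 1)) ^ 2)⁻¹ := by
      rw [mul_comm, zpow_mul, e1, inv_zpow]; norm_cast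
    rw [e1, e2]
    have h1 := pow_ne_zero (n + 1) hq
    have h2 := one_add_pow_ne hq1 (2 * (n + 1))
    rw [mul_comm 2, pow_mul] at h2 ⊢
    generalize q ^ (n + 1) = z at *
    have h3 : 1 + (z ^ 2)⁻¹ = (1 + z ^ 2) / z ^ 2 := by field_simp; ring
    rw [h3]
    field_simp

lemma one_sub_pow_ne {q : ℂ} (hq1 : ‖q‖ < 1) {n : ℕ} (hn : n ≠ 0) : 1 - q ^ n ≠ 0 :=
  sub_ne_zero.mpr (pow_ne_one hq1 hn).symm

lemma gB_neg {q : ℂ} (hq : q ≠ 0) (hq1 : ‖q‖ < 1) (n : ℕ) :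
    q ^ (-((n : ℤ) + 1)) / (1 - q ^ (2 * -((n : ℤ) + 1) + 1)) ^ 2
      = q ^ n * q ^ (2 * n + 1) / (1 - q ^ (2 * n + 1)) ^ 2 := by
  have e1 : q ^ (-((n : ℤ) + 1)) = (q ^ (n + 1))⁻¹ := by
    rw [zpow_neg]; norm_cast
  have e2 : q ^ (2 * -((n : ℤ) + 1) + 1) = (q ^ (2 * n + 1))⁻¹ := by
    rw [← zpow_natCast, ← zpow_neg]; congr 1
  rw [e1, e2]
  have h2 := one_sub_pow_ne hq1 (n := 2 * n + 1) (by omega)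
  have h4 := pow_ne_zero (2 * n + 1) hq
  have h3 : 1 - (q ^ (2 * n + 1))⁻¹ = -(1 - q ^ (2 * n + 1)) / q ^ (2 * n + 1) := by
    field_simp; ring
  rw [h3, div_pow, neg_sq, pow_succ q n]
  have h5 : q ^ (2 * n + 1) = (q ^ n) ^ 2 * q := by ring
  generalize 1 - q ^ (2 * n + 1) = D at *
  rw [h5]
  have h1 := pow_ne_zero n hq
  field_simp

lemma summable_B1 {q : ℂ} (hq1 : ‖q‖ < 1) :
    Summable fun n : ℕ => q ^ n / (1 - q ^ (2 * n + 1)) ^ 2 := by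
  have h := summable_geo hq1 (fun n => ((1 - q ^ (2 * n + 1)) ^ 2)⁻¹) (((1 - 0) ^ 2)⁻¹)
    (((tendsto_const_nhds.sub (tendsto_pow_lin hq1 _)).pow 2).inv₀ (by norm_num))
  exact h

lemma summable_B2 {q : ℂ} (hq1 : ‖q‖ < 1) :
    Summable fun n : ℕ => q ^ n * q ^ (2 * n + 1) / (1 - q ^ (2 * n + 1)) ^ 2 := by
  have h := summable_geo hq1 (fun n => q ^ (2 * n + 1) * ((1 - q ^ (2 * n + 1)) ^ 2)⁻¹)
    (0 * ((1 - 0) ^ 2)⁻¹) ((tendsto_pow_lin hq1 _).mul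
    (((tendsto_const_nhds.sub (tendsto_pow_lin hq1 _)).pow 2).inv₀ (by norm_num)))
  refine h.congr fun n => ?_
  ring

lemma summable_B {q : ℂ} (hq : q ≠ 0) (hq1 : ‖q‖ < 1) :
    Summable (fun n : ℤ => q ^ n / (1 - q ^ (2 * n + 1)) ^ 2) := by
  refine Summable.of_nat_of_neg_add_one ?_ ?_
  · refine (summable_B1 hq1).congr fun n => ?_
    norm_cast
  · refine (summable_B2 hq1).congr fun n => ?_
    rw [gB_neg hq hq1]

/-- Infinite product. -/
noncomputable def pinf (q e : ℂ) : ℂ := ∏' i : ℕ, (1 - e * q ^ (2 * i + 1))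

lemma summable_odd {q : ℂ} (hq1 : ‖q‖ < 1) (e : ℂ) :
    Summable fun i : ℕ => ‖-(e * q ^ (2 * i + 1))‖ := by
  have h := (summable_geo hq1 (fun i => -(e * q ^ (i + 1))) (-(e * 0)) (by
    refine (tendsto_const_nhds.mul ?_).neg
    exact (tendsto_pow_atTop_nhds_zero_of_norm_lt_one hq1).comp (tendsto_add_atTop_nat 1))).norm
  refine h.congr fun i => ?_
  congr 1
  ring

lemma mult_odd {q : ℂ} (hq1 : ‖q‖ < 1) (e : ℂ) :
    Multipliable fun i : ℕ => (1 - e * q ^ (2 * i + 1)) := by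
  simpa [sub_eq_add_neg] using multipliable_one_add_of_summable (summable_odd hq1 e)

lemma pr_tendsto {q : ℂ} (hq1 : ‖q‖ < 1) (e : ℂ) : Tendsto (pr q e) atTop (𝓝 (pinf q e)) :=
  (mult_odd hq1 e).tendsto_prod_tprod_nat

lemma pinf_ne_zero {q : ℂ} (hq1 : ‖q‖ < 1) {e : ℂ} (he : ‖e‖ ≤ 1) : pinf q e ≠ 0 := by
  have h := tprod_one_add_ne_zero_of_summable (f := fun i : ℕ => -(e * q ^ (2 * i + 1))) ?_
    (summable_odd hq1 e)
  · simpa [pinf, sub_eq_add_neg] using h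
  · intro i h
    have h := pr_ne_zero hq1 he (i + 1)
    rw [pr, Finset.prod_ne_zero_iff] at h
    exact h i (by simp) (by rwa [sub_eq_add_neg])

/-- The bilateral Lambert series for `φ²/2`. -/
noncomputable def LL (q : ℂ) : ℂ := ∑' n : ℤ, q ^ n / (1 + q ^ (2 * n))

/-- The bilateral Lambert series for `ψ⁴`. -/
noncomputable def MM (q : ℂ) : ℂ := ∑' n : ℤ, q ^ n / (1 - q ^ (2 * n + 1)) ^ 2

lemma rr_tendsto {q : ℂ} (hq1 : ‖q‖ < 1) :
    Tendsto (rr q) atTop (𝓝 (pinf q 1 / pinf q q)) :=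
  (pr_tendsto hq1 1).div (pr_tendsto hq1 q) (pinf_ne_zero hq1 hq1.le)

lemma LL_eq {q : ℂ} (hq : q ≠ 0) (hq1 : ‖q‖ < 1) :
    LL q * (pinf q 1 / pinf q q) * (pinf q 1 / pinf q q)
      = 1 / 2 * (pinf q (-1) / pinf q (-q)) ^ 2 := by
  have h := tannery _ (summable_A hq hq1) _ _ (rr_tendsto hq1) 0
  refine tendsto_nhds_unique h ?_
  simp_rw [finA hq hq1]
  exact (((pr_tendsto hq1 _).div (pr_tendsto hq1 _)
    (pinf_ne_zero hq1 (by simpa using hq1.le))).pow 2).const_mul _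

lemma MM_eq {q : ℂ} (hq : q ≠ 0) (hq1 : ‖q‖ < 1) :
    MM q * (pinf q 1 / pinf q q) * (pinf q 1 / pinf q q)
      = (pinf q q / pinf q 1) ^ 2 := by
  have h := tannery _ (summable_B hq hq1) _ _ (rr_tendsto hq1) 1
  refine tendsto_nhds_unique h ?_
  simp_rw [finB hq hq1]
  exact (((pr_tendsto hq1 _).div ((pr_tendsto hq1 _).comp (tendsto_add_atTop_nat 1))
    (pinf_ne_zero hq1 (by simp))).pow 2)

lemma LL_section {q : ℂ} (hq : q ≠ 0) (hq1 : ‖q‖ < 1) : LL q + LL (-q) = 2 * LL (q ^ 2) := by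
  have h1 := summable_A hq hq1
  have h2 := summable_A (neg_ne_zero.mpr hq) (by simpa using hq1)
  have hinj : Function.Injective (fun n : ℤ => 2 * n) := fun a b h => by
    simp only at h; omega
  rw [LL, LL, LL, ← h1.tsum_add h2, ← tsum_mul_left]
  rw [← hinj.tsum_eq]
  · refine tsum_congr fun n => ?_
    rw [(even_two_mul n).neg_zpow, (even_two_mul (2 * n)).neg_zpow]
    have : (q ^ 2) ^ n = q ^ (2 * n) := by
      rw [zpow_mul]; norm_cast
    have h' : (q ^ 2) ^ (2 * n) = q ^ (2 * (2 * n)) := by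
      rw [zpow_mul _ 2 (2 * n)]; norm_cast
    rw [this, h']
    ring
  · intro n hn
    by_contra hodd
    have ho : Odd n := by
      rw [← Int.not_even_iff_odd]
      rintro ⟨k, rfl⟩
      exact hodd ⟨k, by simp; ring⟩
    apply hn
    simp only
    rw [ho.neg_zpow, (even_two_mul n).neg_zpow]
    ring

lemma pinf_self (q : ℂ) : pinf q q = eulerF (q ^ 2) := by
  refine tprod_congr fun i => ?_
  rw [← pow_mul]; ring

lemma eulerF_split {q : ℂ} (hq1 : ‖q‖ < 1) : eulerF q = pinf q 1 * pinf q q := by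
  have h := tprod_even_mul_odd (f := fun n : ℕ => 1 - q ^ (n + 1))
    (by simpa using mult_odd hq1 1)
    (by refine (mult_odd hq1 q).congr fun i => ?_
        ring)
  rw [eulerF, ← h, pinf, pinf]
  congr 1
  · exact tprod_congr fun i => by ring
  · exact tprod_congr fun i => by ring

lemma pinf_mul_neg {q : ℂ} (hq1 : ‖q‖ < 1) (e : ℂ) :
    pinf q e * pinf q (-e) = pinf (q ^ 2) (e ^ 2) := by
  rw [pinf, pinf, ← (mult_odd hq1 e).tprod_mul (mult_odd hq1 (-e))]
  refine tprod_congr fun i => ?_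
  rw [← pow_mul]; ring

lemma pinf_neg (q e : ℂ) : pinf (-q) e = pinf q (-e) := by
  refine tprod_congr fun i => ?_
  rw [Odd.neg_pow ⟨i, rfl⟩]; ring

/-- The relation `ψ(q)⁴ + ψ(-q)⁴ = 2 φ(q²)² ψ(q²)²`. -/
lemma MM_section {q : ℂ} (hq : q ≠ 0) (hq1 : ‖q‖ < 1) :
    MM q + MM (-q) = 2 * (eulerF (q ^ 4) ^ 14 / (eulerF (q ^ 2) ^ 6 * eulerF (q ^ 8) ^ 4)) := by
  have hn : -q ≠ 0 := neg_ne_zero.mpr hq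
  have hn1 : ‖-q‖ < 1 := by simpa using hq1
  have hq2 : q ^ 2 ≠ 0 := pow_ne_zero _ hq
  have hq21 : ‖q ^ 2‖ < 1 := by rw [norm_pow]; exact pow_lt_one₀ (norm_nonneg _) hq1 (by norm_num)
  have hq41 : ‖(q ^ 2) ^ 2‖ < 1 := by
    rw [norm_pow]; exact pow_lt_one₀ (norm_nonneg _) hq21 (by norm_num)
  have M1 := MM_eq hq hq1
  have M2 := MM_eq hn hn1
  have L1 := LL_eq hq hq1
  have L2 := LL_eq hn hn1
  have L3 := LL_eq hq2 hq21
  have S := LL_section hq hq1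
  simp only [pinf_neg, neg_neg] at M2 L2
  have r1 := pinf_mul_neg hq1 1
  have r2 := pinf_mul_neg hq1 q
  have r3 := pinf_mul_neg hq21 1
  have r4 := pinf_mul_neg hq21 (q ^ 2)
  have s2 := eulerF_split hq21
  have s4 := eulerF_split hq41
  rw [one_pow] at r1 r3
  have f2 := pinf_self q
  have f4 := pinf_self (q ^ 2)
  have f8 := pinf_self ((q ^ 2) ^ 2)
  rw [show q ^ 4 = (q ^ 2) ^ 2 by ring, show q ^ 8 = ((q ^ 2) ^ 2) ^ 2 by ring, ← f2, ← f4, ← f8]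
  rw [← f2] at s2
  rw [← f4] at s4
  have n1 : pinf q 1 ≠ 0 := pinf_ne_zero hq1 (by simp)
  have n2 : pinf q (-1) ≠ 0 := pinf_ne_zero hq1 (by simp)
  have n3 : pinf q q ≠ 0 := pinf_ne_zero hq1 hq1.le
  have n4 : pinf q (-q) ≠ 0 := pinf_ne_zero hq1 (by simpa using hq1.le)
  have n5 : pinf (q ^ 2) 1 ≠ 0 := pinf_ne_zero hq21 (by simp)
  have n6 : pinf (q ^ 2) (-1) ≠ 0 := pinf_ne_zero hq21 (by simp)
  have n7 : pinf (q ^ 2) (q ^ 2) ≠ 0 := pinf_ne_zero hq21 hq21.le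
  have n8 : pinf (q ^ 2) (-q ^ 2) ≠ 0 := pinf_ne_zero hq21 (by simpa using hq21.le)
  rw [← r3, ← r4] at s4
  rw [← r4]
  generalize pinf (q ^ 2) (-1) = a2' at *
  generalize pinf (q ^ 2) (-q ^ 2) = b2 at *
  generalize pinf (q ^ 2) (q ^ 2) = e2 at *
  generalize pinf (q ^ 2) 1 = a2 at *
  generalize pinf q (-1) = a' at *
  generalize pinf q (-q) = b at *
  generalize pinf q q = e at *
  generalize pinf q 1 = a at *
  subst r1 r2
  have hab : a * a' * b = 1 := by
    apply mul_right_cancel₀ n3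
    linear_combination -s2
  have hab2 : a * a' * a2' * b2 = 1 := by
    apply mul_right_cancel₀ n7
    linear_combination -s4
  have m1 : MM q = 2 * LL q * (e * b / (a * a')) ^ 2 := by
    have h : MM q = (e / a) ^ 4 := by
      field_simp at M1 ⊢
      linear_combination M1
    have h' : LL q = 1 / 2 * (a' / b) ^ 2 * (e / a) ^ 2 := by
      field_simp at L1 ⊢
      linear_combination L1
    rw [h, h']
    field_simp
  have m2 : MM (-q) = 2 * LL (-q) * (e * b / (a * a')) ^ 2 := by
    have h : MM (-q) = (e / a') ^ 4 := by
      field_simp at M2 ⊢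
      linear_combination M2
    have h' : LL (-q) = 1 / 2 * (a / b) ^ 2 * (e / a') ^ 2 := by
      field_simp at L2 ⊢
      linear_combination L2
    rw [h, h']
    field_simp
  have l3 : LL (q ^ 2) = 1 / 2 * (a2' / b2) ^ 2 * (e * b / (a * a')) ^ 2 := by
    field_simp at L3 ⊢
    linear_combination L3
  have hb : b = (a * a')⁻¹ := by
    field_simp; linear_combination hab
  have ha2 : a2' = (a * a' * b2)⁻¹ := by
    field_simp; linear_combination hab2
  have : MM q + MM (-q) = 4 * LL (q ^ 2) * (e * b / (a * a')) ^ 2 := by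
    rw [m1, m2]; linear_combination 2 * (e * b / (a * a')) ^ 2 * S
  rw [this, l3, ha2, hb]
  field_simp
  try norm_num

/-- The odd divisor series. -/
noncomputable def sterm (x : ℂ) (p : ℕ × ℕ) : ℂ :=
  (2 * (p.1 : ℂ) + 1) * x ^ ((2 * p.1 + 1) * (2 * p.2 + 1))

lemma sterm_summable {x : ℂ} (hx : ‖x‖ < 1) : Summable (sterm x) := by
  have hn : ‖‖x‖‖ < 1 := by simpa using hx
  have h1 : Summable fun k : ℕ => (2 * (k : ℝ) + 1) * ‖x‖ ^ k := by
    have ha := (summable_pow_mul_geometric_of_norm_lt_one 1 hn).mul_left 2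
    have hb := summable_geometric_of_lt_one (norm_nonneg x) hx
    refine (ha.add hb).congr fun k => ?_
    ring
  have h2 := summable_geometric_of_lt_one (norm_nonneg x) hx
  have h3 := h1.mul_of_nonneg h2 (fun k => by positivity) (fun k => by positivity)
  refine Summable.of_norm_bounded h3 fun p => ?_
  have hc : ‖(2 * (p.1 : ℂ) + 1)‖ = 2 * (p.1 : ℝ) + 1 := by
    have : (2 * (p.1 : ℂ) + 1) = ((2 * p.1 + 1 : ℕ) : ℂ) := by push_cast; ring
    rw [this, Complex.norm_natCast]; push_cast; ring
  rw [sterm, norm_mul, norm_pow, hc, mul_assoc, ← pow_add]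
  refine mul_le_mul_of_nonneg_left (pow_le_pow_of_le_one (norm_nonneg _) hx.le ?_) (by positivity)
  nlinarith

lemma inner_sum {y : ℂ} (hy : ‖y‖ < 1) :
    ∑' k : ℕ, (2 * (k : ℂ) + 1) * y ^ (2 * k + 1) = y * (1 + y ^ 2) / (1 - y ^ 2) ^ 2 := by
  have hy2 : ‖y ^ 2‖ < 1 := by rw [norm_pow]; exact pow_lt_one₀ (norm_nonneg _) hy (by norm_num)
  have h1 := (hasSum_coe_mul_geometric_of_norm_lt_one hy2).mul_left (2 * y)
  have h2 := (hasSum_geometric_of_norm_lt_one hy2).mul_left y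
  have hne := one_sub_pow_ne hy (n := 2) (by norm_num)
  have h3 := (h1.add h2).tsum_eq
  have : y * (1 + y ^ 2) / (1 - y ^ 2) ^ 2
      = 2 * y * (y ^ 2 / (1 - y ^ 2) ^ 2) + y * (1 - y ^ 2)⁻¹ := by
    field_simp; ring
  rw [this, ← h3]
  refine tsum_congr fun k => ?_
  rw [← pow_mul]; ring

lemma sterm_tsum {x : ℂ} (h0 : x ≠ 0) (hx : ‖x‖ < 1) : ∑' p, sterm x p = x * MM (x ^ 2) := by
  have hq : x ^ 2 ≠ 0 := pow_ne_zero _ h0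
  have hq1 : ‖x ^ 2‖ < 1 := by rw [norm_pow]; exact pow_lt_one₀ (norm_nonneg _) hx (by norm_num)
  have hs := sterm_summable hx
  have hs' : Summable fun p : ℕ × ℕ => sterm x p.swap := (Equiv.prodComm ℕ ℕ).summable_iff.mpr hs
  have e1 : ∑' p, sterm x p = ∑' p : ℕ × ℕ, sterm x p.swap :=
    ((Equiv.prodComm ℕ ℕ).tsum_eq (sterm x)).symm
  rw [e1, hs'.tsum_prod]
  have e2 : ∀ l : ℕ, ∑' k : ℕ, sterm x (Prod.swap (l, k))
      = x * ((x ^ 2) ^ l / (1 - (x ^ 2) ^ (2 * l + 1)) ^ 2 +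
        (x ^ 2) ^ l * (x ^ 2) ^ (2 * l + 1) / (1 - (x ^ 2) ^ (2 * l + 1)) ^ 2) := by
    intro l
    have hy : ‖x ^ (2 * l + 1)‖ < 1 := by
      rw [norm_pow]; exact pow_lt_one₀ (norm_nonneg _) hx (by omega)
    have := inner_sum hy
    have h2 : ∑' k : ℕ, sterm x (Prod.swap (l, k))
        = ∑' k : ℕ, (2 * (k : ℂ) + 1) * (x ^ (2 * l + 1)) ^ (2 * k + 1) := by
      refine tsum_congr fun k => ?_
      simp only [sterm, Prod.swap_prod_mk]
      rw [← pow_mul, mul_comm (2 * l + 1)]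
    have h3 : (x ^ (2 * l + 1)) ^ 2 = (x ^ 2) ^ (2 * l + 1) := by
      rw [← pow_mul, ← pow_mul, mul_comm]
    rw [h2, this, h3, pow_succ x (2 * l), pow_mul x 2 l]
    ring
  simp_rw [e2]
  rw [tsum_mul_left, (summable_B1 hq1).tsum_add (summable_B2 hq1), MM,
    tsum_of_nat_of_neg_add_one]
  · congr 2
    refine tsum_congr fun n => ?_
    rw [gB_neg hq hq1]
  · refine (summable_B1 hq1).congr fun n => ?_
    norm_cast
  · refine (summable_B2 hq1).congr fun n => ?_
    rw [gB_neg hq hq1]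

lemma phi_split {x : ℂ} (hx : ‖x‖ < 1) :
    Phi2222 x = 1 / 2 * (∑' p, sterm x p - Complex.I * ∑' p, sterm (Complex.I * x) p) := by
  have hs := sterm_summable hx
  have hs' := sterm_summable (x := Complex.I * x) (by simpa using hx)
  let i1 : ℕ × ℕ → ℕ × ℕ := fun p => (2 * p.1, 2 * p.2)
  let i2 : ℕ × ℕ → ℕ × ℕ := fun p => (2 * p.1 + 1, 2 * p.2 + 1)
  have hi1 : Function.Injective i1 := by
    rintro ⟨a, b⟩ ⟨c, d⟩ h
    simp only [i1, Prod.mk.injEq] at h ⊢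
    omega
  have hi2 : Function.Injective i2 := by
    rintro ⟨a, b⟩ ⟨c, d⟩ h
    simp only [i2, Prod.mk.injEq] at h ⊢
    omega
  have t1 : ∑' p : ℕ × ℕ, (4 * (p.1 : ℂ) + 1) * x ^ ((4 * p.1 + 1) * (4 * p.2 + 1))
      = ∑' p, (Set.range i1).indicator (sterm x) p := by
    rw [← tsum_subtype, ← (Equiv.ofInjective i1 hi1).tsum_eq]
    refine tsum_congr fun p => ?_
    simp only [Equiv.ofInjective_apply, sterm, i1]
    push_cast
    ring_nf
  have t2 : ∑' p : ℕ × ℕ, (4 * (p.1 : ℂ) + 3) * x ^ ((4 * p.1 + 3) * (4 * p.2 + 3))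
      = ∑' p, (Set.range i2).indicator (sterm x) p := by
    rw [← tsum_subtype, ← (Equiv.ofInjective i2 hi2).tsum_eq]
    refine tsum_congr fun p => ?_
    simp only [Equiv.ofInjective_apply, sterm, i2]
    push_cast
    ring_nf
  rw [Phi2222, t1, t2, ← (hs.indicator _).tsum_add (hs.indicator _), ← tsum_mul_left (a := Complex.I),
    ← hs.tsum_sub (hs'.mul_left _), ← tsum_mul_left]
  refine tsum_congr ?_
  rintro ⟨k, l⟩
  have hI : sterm (Complex.I * x) (k, l)
      = Complex.I ^ ((2 * k + 1) * (2 * l + 1)) * sterm x (k, l) := by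
    simp only [sterm, mul_pow]; ring
  have hI2 : Complex.I ^ ((2 * k + 1) * (2 * l + 1)) = (-1) ^ (k + l) * Complex.I := by
    rw [show (2 * k + 1) * (2 * l + 1) = 4 * (k * l) + 2 * (k + l) + 1 by ring, pow_add, pow_add,
      pow_mul _ 4, pow_mul _ 2, Complex.I_pow_four, Complex.I_sq]
    simp
  rw [hI, hI2]
  have hII := Complex.I_mul_I
  have g1 : ((k, l) ∈ Set.range i1) ↔ (k % 2 = 0 ∧ l % 2 = 0) := by
    constructor
    · rintro ⟨⟨a, b⟩, h⟩
      simp only [i1, Prod.mk.injEq] at h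
      omega
    · rintro ⟨h1, h2⟩
      exact ⟨(k / 2, l / 2), by simp only [i1, Prod.mk.injEq]; omega⟩
  have g2 : ((k, l) ∈ Set.range i2) ↔ (k % 2 = 1 ∧ l % 2 = 1) := by
    constructor
    · rintro ⟨⟨a, b⟩, h⟩
      simp only [i2, Prod.mk.injEq] at h
      omega
    · rintro ⟨h1, h2⟩
      exact ⟨(k / 2, l / 2), by simp only [i2, Prod.mk.injEq]; omega⟩
  have z1 : ((Set.range i1).indicator (sterm x) (k, l)) = if (k % 2 = 0 ∧ l % 2 = 0) then sterm x (k, l) else 0 := by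
    split_ifs with h
    · exact Set.indicator_of_mem (g1.mpr h) _
    · exact Set.indicator_of_notMem (fun h' => h (g1.mp h')) _
  have z2 : ((Set.range i2).indicator (sterm x) (k, l)) = if (k % 2 = 1 ∧ l % 2 = 1) then sterm x (k, l) else 0 := by
    split_ifs with h
    · exact Set.indicator_of_mem (g2.mpr h) _
    · exact Set.indicator_of_notMem (fun h' => h (g2.mp h')) _
  rw [z1, z2]
  rcases Nat.mod_two_eq_zero_or_one k with hk | hk <;>
    rcases Nat.mod_two_eq_zero_or_one l with hl | hl
  · have : Even (k + l) := Nat.even_iff.mpr (by omega)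
    simp only [hk, hl, this.neg_one_pow]
    simp
    linear_combination (1 / 2) * sterm x (k, l) * hII
  · have : Odd (k + l) := Nat.odd_iff.mpr (by omega)
    simp only [hk, hl, this.neg_one_pow]
    simp
    linear_combination sterm x (k, l) * hII
  · have : Odd (k + l) := Nat.odd_iff.mpr (by omega)
    simp only [hk, hl, this.neg_one_pow]
    simp
    linear_combination sterm x (k, l) * hII
  · have : Even (k + l) := Nat.even_iff.mpr (by omega)
    simp only [hk, hl, this.neg_one_pow]
    simp
    linear_combination (1 / 2) * sterm x (k, l) * hII

end PhiAux

open PhiAux in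
/-- `Φ(x) = x F(x⁸)¹⁴/(F(x⁴)⁶F(x¹⁶)⁴)`, i.e.
`ψ = η(q_d⁸)¹⁴/(η(q_d⁴)⁶η(q_d¹⁶)⁴)`. -/
theorem phi2222_eq_eta_quotient (x : ℂ) (hx : ‖x‖ < 1) :
    Phi2222 x
      = x * eulerF (x ^ 8) ^ 14 / (eulerF (x ^ 4) ^ 6 * eulerF (x ^ 16) ^ 4) := by
  by_cases h0 : x = 0
  · subst h0
    simp [Phi2222]
  have hI0 : Complex.I * x ≠ 0 := mul_ne_zero Complex.I_ne_zero h0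
  have hq1 : ‖x ^ 2‖ < 1 := by rw [norm_pow]; exact pow_lt_one₀ (norm_nonneg _) hx (by norm_num)
  have h := MM_section (pow_ne_zero 2 h0) hq1
  rw [phi_split hx, sterm_tsum h0 hx, sterm_tsum hI0 (by simpa using hx), mul_pow, Complex.I_sq,
    neg_one_mul]
  rw [← pow_mul, ← pow_mul, ← pow_mul] at h
  norm_num at h
  rw [mul_div_assoc]
  linear_combination (1 / 2) * x * h - (1 / 2) * x * MM (-x ^ 2) * Complex.I_mul_I
end

section
/- Let ψ(x) = −x + Σ_{k=1}^∞ [ (−1)^{k+1}(6k+1) x^{(6k+1)²} + (−1)^{k}(6k−1) x^{(6k−1)²} ] and F(x) = ∏_{n=1}^∞ (1 − xⁿ). Then for every complex number x with |x| < 1, the two-sided series Σ_{k∈ℤ} (−1)^{k+1} (2k+1) x^{(6k+1)²} satisfies 3 · Σ_{k∈ℤ} (−1)^{k+1} (2k+1) x^{(6k+1)²} = ψ(x) − 2 x · F(x^{24}). -/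
open scoped BigOperators

/-- The coefficient `ψ(x) = −x + Σ_{k=1}^∞ [(−1)^{k+1}(6k+1) x^{(6k+1)²}
+ (−1)^{k}(6k−1) x^{(6k−1)²}]` of (minus) `xyz` in the open Gromov–Witten
potential of `ℙ¹_{3,3,3}` (summation reindexed by `k = j + 1`). -/
noncomputable def psi333 (x : ℂ) : ℂ :=
  -x + ∑' j : ℕ,
    ((-1 : ℂ) ^ (j + 2) * (6 * (j : ℂ) + 7) * x ^ ((6 * j + 7) ^ 2)
      + (-1 : ℂ) ^ (j + 1) * (6 * (j : ℂ) + 5) * x ^ ((6 * j + 5) ^ 2))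

lemma wx_prod_bound (x : ℂ) (hx : ‖x‖ < 1) (k n : ℕ) :
    ‖∏ i ∈ Finset.range n, (1 - x ^ (k + i + 1))‖ ≤ Real.exp (1 - ‖x‖)⁻¹ := by
  have hs : Summable fun i : ℕ => ‖x‖ ^ i := summable_geometric_of_lt_one (norm_nonneg _) hx
  calc ‖∏ i ∈ Finset.range n, (1 - x ^ (k + i + 1))‖
      = ∏ i ∈ Finset.range n, ‖1 - x ^ (k + i + 1)‖ := norm_prod _ _
    _ ≤ ∏ i ∈ Finset.range n, Real.exp (‖x‖ ^ i) := by
        apply Finset.prod_le_prod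
        · intros; positivity
        · intro i _
          have h1 : ‖1 - x ^ (k + i + 1)‖ ≤ 1 + ‖x‖ ^ (k + i + 1) := by
            simpa using norm_sub_le (1 : ℂ) (x ^ (k + i + 1))
          have h2 : ‖x‖ ^ (k + i + 1) ≤ ‖x‖ ^ i :=
            pow_le_pow_of_le_one (norm_nonneg _) hx.le (by omega)
          have h3 := Real.add_one_le_exp (‖x‖ ^ i)
          linarith
    _ = Real.exp (∑ i ∈ Finset.range n, ‖x‖ ^ i) := (Real.exp_sum _ _).symm
    _ ≤ _ := by
        apply Real.exp_le_exp.2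
        rw [← tsum_geometric_of_lt_one (norm_nonneg _) hx]
        exact hs.sum_le_tsum _ (fun i _ => by positivity)

lemma wx_term_bound (x : ℂ) (hx : ‖x‖ < 1) (k n : ℕ) :
    ‖x ^ ((k + 1) * n) * ∏ i ∈ Finset.range (n + 1), (1 - x ^ (k + i + 1))‖
      ≤ ‖x‖ ^ n * Real.exp (1 - ‖x‖)⁻¹ := by
  rw [norm_mul, norm_pow]
  have h1 : ‖x‖ ^ ((k + 1) * n) ≤ ‖x‖ ^ n :=
    pow_le_pow_of_le_one (norm_nonneg _) hx.le (by nlinarith)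
  have := wx_prod_bound x hx k (n + 1)
  gcongr

lemma wx_summable (x : ℂ) (hx : ‖x‖ < 1) (a b : ℂ) (e : ℕ → ℕ) (he : ∀ n, n ≤ e n) :
    Summable fun n : ℕ => (-1 : ℂ) ^ n * (a * n + b) * x ^ e n := by
  have h1 : Summable fun n : ℕ => (n : ℝ) * ‖x‖ ^ n := by
    simpa using summable_pow_mul_geometric_of_norm_lt_one 1 (r := ‖x‖) (by simpa using hx)
  have h0 : Summable fun i : ℕ => ‖x‖ ^ i := summable_geometric_of_lt_one (norm_nonneg _) hx
  refine Summable.of_norm_bounded ((h1.mul_left ‖a‖).add (h0.mul_left ‖b‖)) fun n => ?_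
  have h2 : ‖x‖ ^ e n ≤ ‖x‖ ^ n := pow_le_pow_of_le_one (norm_nonneg _) hx.le (he n)
  have h3 : ‖a * n + b‖ ≤ ‖a‖ * n + ‖b‖ := by simpa using norm_add_le (a * n) b
  calc _ = ‖a * n + b‖ * ‖x‖ ^ e n := by simp
    _ ≤ (‖a‖ * n + ‖b‖) * ‖x‖ ^ n := by gcongr
    _ = _ := by ring

lemma wx_pentagonal (x : ℂ) (hx : ‖x‖ < 1) :
    eulerF x = ∑' (k : ℕ), (-1) ^ k * (x ^ pentagonal (-k) - x ^ pentagonal (k + 1)) := by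
  have h0 : Summable fun i : ℕ => ‖x‖ ^ i := summable_geometric_of_lt_one (norm_nonneg _) hx
  have hb := h0.mul_right (Real.exp (1 - ‖x‖)⁻¹)
  have p1 (k : ℕ) : k ≤ pentagonal (-k) := by
    have := two_mul_natCast_pentagonal_neg k
    nlinarith
  have p2 (k : ℕ) : k ≤ pentagonal (k + 1) := by
    have := two_mul_natCast_pentagonal (k + 1)
    nlinarith
  refine Pentagonal.tprod_one_sub_pow (tendsto_pow_atTop_nhds_zero_of_norm_lt_one hx) ?_ ?_ ?_ ?_
  · exact fun k => Summable.of_norm_bounded hb (wx_term_bound x hx k)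
  · intro k
    simp_rw [sub_eq_add_neg]
    apply multipliable_one_add_of_summable
    simp only [norm_neg, norm_pow]
    exact ((h0.comp_injective (add_left_injective (k + 1))))
  · have s1 := wx_summable x hx 0 1 _ p1
    have s2 := wx_summable x hx 0 1 _ p2
    simpa [mul_sub] using s1.sub s2
  · have ht : Filter.Tendsto (fun k : ℕ => ‖x‖ ^ k * ∑' n : ℕ, ‖x‖ ^ n * Real.exp (1 - ‖x‖)⁻¹)
        Filter.atTop (nhds 0) := by
      simpa using (tendsto_pow_atTop_nhds_zero_of_lt_one (norm_nonneg x) hx).mul_const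
        (∑' n : ℕ, ‖x‖ ^ n * Real.exp (1 - ‖x‖)⁻¹)
    refine squeeze_zero_norm (fun k => ?_) ht
    rw [norm_mul]
    refine mul_le_mul ?_ (tsum_of_norm_bounded hb.hasSum (wx_term_bound x hx k))
      (norm_nonneg _) (by positivity)
    simp only [norm_mul, norm_pow, norm_neg, norm_one, one_pow, one_mul]
    refine pow_le_pow_of_le_one (norm_nonneg _) hx.le ?_
    rw [Nat.le_div_iff_mul_le (by norm_num)]
    nlinarith

lemma wx_eta (x : ℂ) (hx : ‖x‖ < 1) :
    x * eulerF (x ^ 24) = ∑' k : ℕ, ((-1 : ℂ) ^ k * x ^ ((6 * k + 1) ^ 2)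
      - (-1 : ℂ) ^ k * x ^ ((6 * k + 5) ^ 2)) := by
  rw [wx_pentagonal _ (by rw [norm_pow]; exact pow_lt_one₀ (norm_nonneg _) hx (by norm_num)),
    ← tsum_mul_left]
  congr 1; ext k
  have e1 : (6 * k + 1) ^ 2 = 24 * pentagonal (-k) + 1 := by
    have := two_mul_natCast_pentagonal_neg k
    zify; linarith
  have e2 : (6 * k + 5) ^ 2 = 24 * pentagonal (k + 1) + 1 := by
    have := two_mul_natCast_pentagonal (k + 1)
    zify; linarith
  rw [e1, e2, ← pow_mul, ← pow_mul]
  ring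

/-- `3 Σ_{k∈ℤ} (−1)^{k+1}(2k+1) x^{(6k+1)²} = ψ(x) − 2x F(x²⁴)`: three times the
coefficient of `yz` in the matrix-factorization entry `w_x` for `ℙ¹_{3,3,3}`
equals `ψ(x) − 2η(q)` with `q = x²⁴`. -/
theorem coeff_yz_of_wx (x : ℂ) (hx : ‖x‖ < 1) :
    3 * ∑' k : ℤ, (-1 : ℂ) ^ (k + 1) * (2 * (k : ℂ) + 1) * x ^ ((6 * k + 1) ^ 2)
      = psi333 x - 2 * x * eulerF (x ^ 24) := by
  have eA (n : ℕ) : n ≤ (6 * n + 1) ^ 2 := by nlinarith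
  have eB (n : ℕ) : n ≤ (6 * n + 5) ^ 2 := by nlinarith
  have sA (a b : ℂ) := wx_summable x hx a b _ eA
  have sB (a b : ℂ) := wx_summable x hx a b _ eB
  have hA (n : ℕ) : (-1 : ℂ) ^ ((n : ℤ) + 1) * (2 * ((n : ℤ) : ℂ) + 1) * x ^ ((6 * (n : ℤ) + 1) ^ 2)
      = (-1 : ℂ) ^ n * ((-2) * n + (-1)) * x ^ ((6 * n + 1) ^ 2) := by
    have e : (6 * (n : ℤ) + 1) ^ 2 = (((6 * n + 1) ^ 2 : ℕ) : ℤ) := by push_cast; ring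
    rw [e, zpow_natCast, zpow_add₀ (by norm_num), zpow_natCast]
    push_cast; ring
  have hB (n : ℕ) : (-1 : ℂ) ^ (-((n : ℤ) + 1) + 1) * (2 * ((-((n : ℤ) + 1) : ℤ) : ℂ) + 1)
        * x ^ ((6 * (-((n : ℤ) + 1)) + 1) ^ 2)
      = (-1 : ℂ) ^ n * ((-2) * n + (-1)) * x ^ ((6 * n + 5) ^ 2) := by
    have e : (6 * (-((n : ℤ) + 1)) + 1) ^ 2 = (((6 * n + 5) ^ 2 : ℕ) : ℤ) := by push_cast; ring
    have e' : -((n : ℤ) + 1) + 1 = -(n : ℤ) := by ring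
    rw [e, e', zpow_natCast, zpow_neg, ← inv_zpow, zpow_natCast]
    push_cast; norm_num; left; ring
  rw [tsum_of_nat_of_neg_add_one (by simp_rw [hA]; exact sA _ _) (by simp_rw [hB]; exact sB _ _)]
  simp_rw [hA, hB]
  have hpsi : psi333 x = ∑' n : ℕ, (-1 : ℂ) ^ n * ((-6) * n + (-1)) * x ^ ((6 * n + 1) ^ 2)
      + ∑' n : ℕ, (-1 : ℂ) ^ n * ((-6) * n + (-5)) * x ^ ((6 * n + 5) ^ 2) := by
    rw [(sA (-6) (-1)).tsum_eq_zero_add, add_assoc,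
      ← ((summable_nat_add_iff 1).2 (sA (-6) (-1))).tsum_add (sB (-6) (-5)), psi333]
    congr 1
    · simp
    · congr 1; ext j
      push_cast; ring
  have heta := wx_eta x hx
  have sA1 : Summable fun k : ℕ => (-1 : ℂ) ^ k * x ^ ((6 * k + 1) ^ 2) := by simpa using sA 0 1
  have sB1 : Summable fun k : ℕ => (-1 : ℂ) ^ k * x ^ ((6 * k + 5) ^ 2) := by simpa using sB 0 1
  rw [sA1.tsum_sub sB1] at heta
  have hA3 : 3 * ∑' n : ℕ, (-1 : ℂ) ^ n * ((-2) * n + (-1)) * x ^ ((6 * n + 1) ^ 2)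
      = ∑' n : ℕ, (-1 : ℂ) ^ n * ((-6) * n + (-1)) * x ^ ((6 * n + 1) ^ 2)
        - 2 * ∑' k : ℕ, (-1 : ℂ) ^ k * x ^ ((6 * k + 1) ^ 2) := by
    rw [← tsum_mul_left, ← tsum_mul_left, ← (sA _ _).tsum_sub (sA1.mul_left 2)]
    congr 1; ext n; ring
  have hB3 : 3 * ∑' n : ℕ, (-1 : ℂ) ^ n * ((-2) * n + (-1)) * x ^ ((6 * n + 5) ^ 2)
      = ∑' n : ℕ, (-1 : ℂ) ^ n * ((-6) * n + (-5)) * x ^ ((6 * n + 5) ^ 2)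
        + 2 * ∑' k : ℕ, (-1 : ℂ) ^ k * x ^ ((6 * k + 5) ^ 2) := by
    rw [← tsum_mul_left, ← tsum_mul_left, ← (sB _ _).tsum_add (sB1.mul_left 2)]
    congr 1; ext n; ring
  rw [mul_add, hA3, hB3, hpsi, mul_assoc 2 x, heta]
  ring
end
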